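/- arXiv:0712.2177 — 2 statements merged into one kernel-verified Lean document; each statement's English description precedes it below -/
import Mathlib

section
/- Assume q̄′ is not the zero polynomial in K[X]. Then for every y ∈ F, the function x ↦ Φ_ns(x,y) lies in L(F); the function y ↦ ∫^F Φ_ns(x,y) dx is the lift at 0,R of the function v ↦ Σ_{ω ∈ K : q̄(ω) = v, q̄′(ω) ≠ 0} ∫_K f(ω, −q̄′(ω)u) du · X^{−R} (the sum is over the simple solutions ω of q̄(ω) = v); moreover this function of y lies in L(F) and ∫^F∫^F Φ_ns(x,y) dx dy = ∫_K∫_K f(ω,u) dω du. -/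
/-!
Write `m = -R > 0`. For `y ∉ t^R O` the section `x ↦ Φ_ns(x, y)` vanishes. For `y = t^R Y` with
`Y ∈ O`, a point `x` contributes only if `q(x) ≡ Y` modulo `t^m`, so that the residue `ω` of `x` is
a simple solution of `q̄(ω) = Ȳ`; there are finitely many such `ω` because `q̄′ ≠ 0`. Newton's
iteration gives `a ≡ ω` with `q(a) ≡ Y` modulo `t^(m+1)`, and this finite
precision suffices since the section depends on residues of quotients by `t^m` only. The
first-order expansion of `q` at `a` shows that near `ω` the section is the lift of `u ↦ f(ω, -q̄′(ω)u)` at `a, m` (`CDVF.PhiNS_section`). The axioms of the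
integral give `∫ g^{a,n} = X^n ∫ g` (`CDVF.IsIntegralF.liftAt`), and with it the formula for the
integral over `x`.

What remains is the identity `∫ Σ_ω ∫ f(ω, -q̄′(ω)u) du dv = ∬ f` over `K`. The dilation axiom for
units of `O` says that Haar measure on `K` scales by the given norm
(`CDVF.IsIntegralF.integral_dilate`), so the inner integral is `‖q̄′(ω)‖⁻¹ φ(ω)` with
`φ(ω) = ∫ f(ω, u) du`, and the identity is the area formula for `q̄` applied to `φ`.

If `f = 0` this is trivial. Otherwise `f` is a nonzero locally constant function of compact support,
which forces the norm of `K` to be ultrametric (`IsSB.isUltrametricDist`). Then the open conull set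
`{q̄′ ≠ 0}` is a countable disjoint union of balls `B` on which `φ` and `‖q̄′‖` are constant and
which `q̄` maps bijectively onto balls of measure `‖q̄′‖ μ(B)` (`exists_good_radius`,
`exists_ball_partition`). On each `B` the area formula is an equality of volumes, and summation
over `B` is justified by absolute convergence (`area_formula`).
-/

noncomputable section

open MeasureTheory Polynomial
open scoped Classical

/-- The field `ℂ(X)` of complex rational functions. -/
abbrev CX : Type := RatFunc ℂ

/-- A complete discrete valuation field with residue field `K`:
`Fc` is the field, `O` its ring of integers, `t` a fixed prime element,
`res` the residue map and `ν` the discrete valuation.  The axioms say that `O` is a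
valuation subring of `Fc`, `t` is irreducible in `O`, `res` is surjective with kernel
`tO`, every nonzero element is a unit times `t ^ ν`, and `O` is `t`-adically complete. -/
structure CDVF (K : Type) [Field K] : Type 1 where
  Fc : Type
  fieldF : Field Fc
  O : Subring Fc
  t : Fc
  ht : t ∈ O
  res : O →+* K
  ν : Fc → ℤ
  hval : ∀ x : Fc, x ∈ O ∨ x⁻¹ ∈ O
  hirr : Irreducible (⟨t, ht⟩ : O)
  hres_surj : Function.Surjective res
  hres_ker : ∀ x : O, res x = 0 ↔ (⟨t, ht⟩ : O) ∣ x
  hν : ∀ x : Fc, x ≠ 0 → ∃ u : O, IsUnit u ∧ x = (u : Fc) * t ^ ν x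
  hcomplete : ∀ s : ℕ → O, (∀ n : ℕ, (⟨t, ht⟩ : O) ^ n ∣ (s (n + 1) - s n)) →
    ∃ L : O, ∀ n : ℕ, (⟨t, ht⟩ : O) ^ n ∣ (L - s n)

attribute [instance] CDVF.fieldF

namespace CDVF

variable {K : Type} [Field K] (E : CDVF K)

/-- The residue map, extended by zero outside the ring of integers. -/
def resF (x : E.Fc) : K := if h : x ∈ E.O then E.res ⟨x, h⟩ else 0

/-- The translated fractional ideal `a + t^c O`. -/
def tfi (a : E.Fc) (c : ℤ) : Set E.Fc := {y : E.Fc | ∃ z ∈ E.O, y = a + E.t ^ c * z}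

/-- The lift `f⁰` of a function on the residue field. -/
def lift0 (f : K → ℂ) : E.Fc → CX := fun x =>
  if x ∈ E.O then algebraMap ℂ CX (f (E.resF x)) else 0

/-- The lift `f^{a,n}` of `f` at `a, n`, determined by `f^{a,n}(a + t^n x) = f⁰(x)`. -/
def liftAt (f : K → ℂ) (a : E.Fc) (n : ℤ) : E.Fc → CX := fun z =>
  E.lift0 f (E.t ^ (-n) * (z - a))

/-- The two-dimensional lift `f⁰` of `f : K × K → ℂ`. -/
def lift0₂ (f : K × K → ℂ) : E.Fc → E.Fc → CX := fun x y =>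
  if x ∈ E.O ∧ y ∈ E.O then algebraMap ℂ CX (f (E.resF x, E.resF y)) else 0

/-- The lift of `f : K × K → ℂ` at `(a₁,a₂),(n₁,n₂)`. -/
def liftAt₂ (f : K × K → ℂ) (a₁ a₂ : E.Fc) (n₁ n₂ : ℤ) : E.Fc → E.Fc → CX := fun z w =>
  E.lift0₂ f (E.t ^ (-n₁) * (z - a₁)) (E.t ^ (-n₂) * (w - a₂))

/-- The space `L(F)` of integrable functions on `F`: the `ℂ(X)`-span of the lifts
`f^{a,n}` of Haar integrable functions `f` on the residue field. -/
def LF [MeasurableSpace K] (μ : Measure K) : Submodule CX (E.Fc → CX) :=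
  Submodule.span CX
    {g : E.Fc → CX | ∃ f : K → ℂ, Integrable f μ ∧ ∃ (a : E.Fc) (n : ℤ), g = E.liftAt f a n}

/-- `Φ(x,y) = f⁰(x, y − t^R q(x))`. -/
def Phi (f : K × K → ℂ) (R : ℤ) (q : Polynomial E.O) : E.Fc → E.Fc → CX := fun x y =>
  E.lift0₂ f x (y - E.t ^ R * Polynomial.eval x (q.map E.O.subtype))

/-- The non-singular part `Φ_ns` of `Φ`: the restriction of `Φ` to `W_ns × F`,
extended by zero, where `W_ns = {x ∈ O : q̄′(x̄) ≠ 0}`. -/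
def PhiNS (f : K × K → ℂ) (R : ℤ) (q : Polynomial E.O) : E.Fc → E.Fc → CX := fun x y =>
  if x ∈ E.O ∧ Polynomial.eval (E.resF x) (Polynomial.derivative (q.map E.res)) ≠ 0 then
    E.Phi f R q x y else 0

/-- The singular part `Φ_sing` of `Φ`: the restriction of `Φ` to `W_sing × F`,
extended by zero, where `W_sing = {x ∈ O : q̄′(x̄) = 0}`. -/
def PhiSing (f : K × K → ℂ) (R : ℤ) (q : Polynomial E.O) : E.Fc → E.Fc → CX := fun x y =>
  if x ∈ E.O ∧ Polynomial.eval (E.resF x) (Polynomial.derivative (q.map E.res)) = 0 then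
    E.Phi f R q x y else 0

end CDVF

section Normed

variable {K : Type} [NontriviallyNormedField K]

/-- The absolute value `|α| = |res(α t^{−ν(α)})|_K ⬝ X^{ν(α)} ∈ ℂ(X)` of `α ∈ F^×`. -/
def CDVF.absF (E : CDVF K) (α : E.Fc) : CX :=
  algebraMap ℂ CX ((‖E.resF (α * E.t ^ (-E.ν α))‖ : ℝ) : ℂ) * RatFunc.X ^ E.ν α

/-- Schwartz–Bruhat functions on `K × K` (for nonarchimedean `K`: the locally constant
functions of compact support). -/
def IsSB (f : K × K → ℂ) : Prop := IsLocallyConstant f ∧ HasCompactSupport f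

variable [MeasurableSpace K] (μ : Measure K)

/-- A Haar integrable `f : K × K → ℂ` is Fubini: both repeated integrals exist and agree. -/
def KFubini (f : K × K → ℂ) : Prop :=
  Integrable f (μ.prod μ) ∧
  (∀ u : K, Integrable (fun v => f (u, v)) μ) ∧
  (∀ v : K, Integrable (fun u => f (u, v)) μ) ∧
  Integrable (fun u => ∫ v, f (u, v) ∂μ) μ ∧
  Integrable (fun v => ∫ u, f (u, v) ∂μ) μ ∧
  (∫ u, ∫ v, f (u, v) ∂μ ∂μ) = ∫ v, ∫ u, f (u, v) ∂μ ∂μ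

/-- `I` is the two-dimensional integral `∫^F` on `L(F)`: a `ℂ(X)`-linear functional which
lifts the Haar integral, is translation invariant, and is compatible with multiplicative
structure. -/
def CDVF.IsIntegralF (E : CDVF K) (I : (E.Fc → CX) →ₗ[CX] CX) : Prop :=
  (∀ f : K → ℂ, Integrable f μ → I (E.lift0 f) = algebraMap ℂ CX (∫ u, f u ∂μ)) ∧
  (∀ g ∈ E.LF μ, ∀ a : E.Fc, I (fun x => g (x + a)) = I g) ∧
  (∀ g ∈ E.LF μ, ∀ α : E.Fc, α ≠ 0 → I (fun x => g (α * x)) = (E.absF α)⁻¹ * I g)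

/-- A `ℂ(X)`-valued function on `F × F` is Fubini (with respect to the integral `I`):
all sections and repeated integrands are integrable and the two repeated integrals agree. -/
def CDVF.FFubini (E : CDVF K) (I : (E.Fc → CX) →ₗ[CX] CX) (g : E.Fc → E.Fc → CX) : Prop :=
  (∀ x : E.Fc, (fun y => g x y) ∈ E.LF μ) ∧
  ((fun x => I (fun y => g x y)) ∈ E.LF μ) ∧
  (∀ y : E.Fc, (fun x => g x y) ∈ E.LF μ) ∧
  ((fun y => I (fun x => g x y)) ∈ E.LF μ) ∧
  I (fun x => I (fun y => g x y)) = I (fun y => I (fun x => g x y))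

/-- The conclusion of the change-of-variables conjecture for the data
`a₁, a₂, n₁, n₂, h`: for every Schwartz–Bruhat `f` on `K × K`, with `g` the lift of `f` at
`(a₁,a₂),(n₁,n₂)`, the function `(x,y) ↦ g(x, y − h(x))` is Fubini on `F × F` with
repeated integral `∫∫ f du dv ⬝ X^{n₁+n₂}`. -/
def CDVF.ConjHolds (E : CDVF K) (I : (E.Fc → CX) →ₗ[CX] CX)
    (a₁ a₂ : E.Fc) (n₁ n₂ : ℤ) (h : Polynomial E.Fc) : Prop :=
  ∀ f : K × K → ℂ, IsSB f →
    E.FFubini μ I (fun x y => E.liftAt₂ f a₁ a₂ n₁ n₂ x (y - Polynomial.eval x h)) ∧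
    I (fun y => I (fun x => E.liftAt₂ f a₁ a₂ n₁ n₂ x (y - Polynomial.eval x h))) =
      algebraMap ℂ CX (∫ v, ∫ u, f (u, v) ∂μ ∂μ) * RatFunc.X ^ (n₁ + n₂)

end Normed

section Algebra

/-! ### Simple roots over the ring of integers and sections of `Φ_ns` -/

/-- Newton's iteration with a frozen slope: an approximate root modulo `τ` at which the derivative
is invertible modulo `τ` improves to an approximate root modulo any power of `τ`. -/
lemma exists_approx_root {A : Type*} [CommRing A] (τ : A) (q : Polynomial A) (Y e a₀ : A)
    (h0 : τ ∣ q.eval a₀ - Y) (h1 : τ ∣ 1 - e * q.derivative.eval a₀) (n : ℕ) :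
    ∃ a, τ ∣ a - a₀ ∧ τ ^ (n + 1) ∣ q.eval a - Y := by
  induction n with
  | zero => exact ⟨a₀, by simp, by simpa using h0⟩
  | succ n ih =>
    obtain ⟨a, ha, w, hw⟩ := ih
    have hτ : τ ∣ 1 - e * q.derivative.eval a := by
      have h2 : τ ∣ q.derivative.eval a - q.derivative.eval a₀ :=
        ha.trans (Polynomial.sub_dvd_eval_sub a a₀ q.derivative)
      have : 1 - e * q.derivative.eval a = (1 - e * q.derivative.eval a₀) -
          e * (q.derivative.eval a - q.derivative.eval a₀) := by ring
      rw [this]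
      exact dvd_sub h1 (h2.mul_left e)
    refine ⟨a - e * (q.eval a - Y), ?_, ?_⟩
    · have : a - e * (q.eval a - Y) - a₀ = (a - a₀) - τ * (τ ^ n * w * e) := by
        rw [hw]; ring
      rw [this]
      exact dvd_sub ha (dvd_mul_right _ _)
    · obtain ⟨k, hk⟩ := q.binomExpansion a (-(e * (q.eval a - Y)))
      obtain ⟨c, hc⟩ := hτ
      rw [sub_eq_add_neg a, hk]
      refine ⟨w * c + k * e ^ 2 * τ ^ n * w ^ 2, ?_⟩
      have : q.eval a + q.derivative.eval a * -(e * (q.eval a - Y)) +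
          k * (-(e * (q.eval a - Y))) ^ 2 - Y =
          (q.eval a - Y) * (1 - e * q.derivative.eval a) + k * e ^ 2 * (q.eval a - Y) ^ 2 := by
        ring
      rw [this, hc, hw]
      ring

namespace CDVF

variable {K : Type} [Field K] (E : CDVF K)

/-- The prime element as an element of the ring of integers. -/
def tO : E.O := ⟨E.t, E.ht⟩

@[simp] lemma coe_tO : (E.tO : E.Fc) = E.t := rfl

lemma tO_ne_zero : E.tO ≠ 0 := E.hirr.ne_zero

lemma t_ne_zero : E.t ≠ 0 := fun h => E.tO_ne_zero (Subtype.ext h)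

lemma res_eq_zero_iff (x : E.O) : E.res x = 0 ↔ E.tO ∣ x := E.hres_ker x

lemma res_tO : E.res E.tO = 0 := (E.res_eq_zero_iff _).2 dvd_rfl

lemma resF_coe (x : E.O) : E.resF (x : E.Fc) = E.res x := by
  simp [resF]

lemma res_ne_zero_of_isUnit {u : E.O} (hu : IsUnit u) : E.res u ≠ 0 :=
  (hu.map E.res).ne_zero

lemma res_eq_zero_of_lt {u w : E.O} {n m : ℤ} (h : (u : E.Fc) * E.t ^ n = w * E.t ^ m)
    (hnm : n < m) : E.res u = 0 := by
  rw [res_eq_zero_iff]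
  obtain ⟨k, hk⟩ := Int.le.dest (Int.add_one_le_iff.2 hnm)
  have ht := E.t_ne_zero
  refine ⟨E.tO ^ k * w, Subtype.ext ?_⟩
  have h2 : (u : E.Fc) = w * E.t ^ (1 + k : ℤ) := by
    have : m = (1 + k : ℤ) + n := by omega
    rw [this, zpow_add₀ ht _ n, ← mul_assoc] at h
    exact mul_right_cancel₀ (zpow_ne_zero n ht) h
  rw [h2, zpow_add₀ ht]
  push_cast
  rw [zpow_one, zpow_natCast, coe_tO]
  ring

lemma ν_eq {u : E.O} (hu : E.res u ≠ 0) (n : ℤ) : E.ν ((u : E.Fc) * E.t ^ n) = n := by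
  have hne : (u : E.Fc) * E.t ^ n ≠ 0 := by
    refine mul_ne_zero (fun h => hu ?_) (zpow_ne_zero _ E.t_ne_zero)
    have : u = 0 := Subtype.ext h
    simp [this]
  obtain ⟨w, hw, h⟩ := E.hν _ hne
  rcases lt_trichotomy n (E.ν ((u : E.Fc) * E.t ^ n)) with h1 | h1 | h1
  · exact absurd (E.res_eq_zero_of_lt h h1) hu
  · exact h1.symm
  · exact absurd (E.res_eq_zero_of_lt h.symm h1) (E.res_ne_zero_of_isUnit hw)

lemma isUnit_of_res_ne_zero {u : E.O} (hu : E.res u ≠ 0) : IsUnit u := by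
  have hne : (u : E.Fc) ≠ 0 := fun h => hu (by
    have : u = 0 := Subtype.ext h
    simp [this])
  obtain ⟨w, hw, h⟩ := E.hν _ hne
  have h0 : E.ν (u : E.Fc) = 0 := by simpa using E.ν_eq hu 0
  rw [h0, zpow_zero, mul_one] at h
  rwa [Subtype.ext h]

lemma dvd_of_scale_mem {z : E.O} {m : ℕ} (h : E.t ^ (-(m : ℤ)) * (z : E.Fc) ∈ E.O) :
    E.tO ^ m ∣ z := by
  refine ⟨⟨_, h⟩, Subtype.ext ?_⟩
  have := pow_ne_zero m E.t_ne_zero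
  push_cast
  rw [zpow_neg, zpow_natCast, coe_tO]
  field_simp

lemma scale_eq (u : E.O) (m : ℕ) :
    E.t ^ (-(m : ℤ)) * ((E.tO ^ m * u : E.O) : E.Fc) = u := by
  have := pow_ne_zero m E.t_ne_zero
  push_cast
  rw [zpow_neg, zpow_natCast, coe_tO]
  field_simp

lemma lift0_coe (g : K → ℂ) (u : E.O) : E.lift0 g u = algebraMap ℂ CX (g (E.res u)) := by
  simp [lift0, resF_coe]

lemma eval_coe (q : Polynomial E.O) (x : E.O) :
    Polynomial.eval (x : E.Fc) (q.map E.O.subtype) = ((q.eval x : E.O) : E.Fc) := by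
  rw [Polynomial.eval_map]
  exact Polynomial.eval₂_at_apply E.O.subtype x

lemma eval_res (q : Polynomial E.O) (x : E.O) :
    Polynomial.eval (E.res x) (q.map E.res) = E.res (q.eval x) := by
  rw [Polynomial.eval_map, Polynomial.eval₂_at_apply]

lemma eval_res_derivative (q : Polynomial E.O) (x : E.O) :
    Polynomial.eval (E.res x) (Polynomial.derivative (q.map E.res)) =
      E.res (q.derivative.eval x) := by
  rw [Polynomial.derivative_map, eval_res]

/-- Hensel lifting of a simple root of `q̄(ω) = Ȳ`, to finite precision. -/
lemma exists_lift_root (q : Polynomial E.O) (Y : E.O) (ω : K)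
    (h : Polynomial.eval ω (q.map E.res) = E.res Y)
    (h' : Polynomial.eval ω (Polynomial.derivative (q.map E.res)) ≠ 0) (n : ℕ) :
    ∃ a : E.O, E.res a = ω ∧ E.tO ^ (n + 1) ∣ q.eval a - Y := by
  obtain ⟨a₀, rfl⟩ := E.hres_surj ω
  rw [eval_res_derivative] at h'
  rw [eval_res] at h
  obtain ⟨e, he⟩ := (E.isUnit_of_res_ne_zero h').exists_left_inv
  obtain ⟨a, h1, h2⟩ := exists_approx_root E.tO q Y e a₀
    ((E.res_eq_zero_iff _).1 (by rw [map_sub, h, sub_self])) (by rw [he]; simp) n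
  refine ⟨a, ?_, h2⟩
  have := (E.res_eq_zero_iff _).2 h1
  rwa [map_sub, sub_eq_zero] at this

/-- First-order expansion of `q` at an approximate simple root `a`, at points `x ≡ a` modulo the
prime element; the slope is a unit with residue `q̄′`. -/
lemma exists_slope (q : Polynomial E.O) {a x : E.O} (hx : E.res x = E.res a) :
    ∃ g : E.O, E.res g = Polynomial.eval (E.res a) (Polynomial.derivative (q.map E.res)) ∧
      q.eval x = q.eval a + (x - a) * g := by
  obtain ⟨k, hk⟩ := q.binomExpansion a (x - a)
  refine ⟨q.derivative.eval a + k * (x - a), ?_, ?_⟩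
  · rw [eval_res_derivative, map_add, map_mul, map_sub, hx, sub_self, mul_zero, add_zero]
  · rw [add_sub_cancel] at hk
    rw [hk]; ring

/-- For `x ≡ a` modulo the prime element, `q(x)` agrees with `Y` to order `m` exactly when `x`
agrees with the approximate root `a` to order `m`. -/
lemma dvd_iff_dvd (q : Polynomial E.O) {a x Y : E.O} {m : ℕ} (hx : E.res x = E.res a)
    (h' : Polynomial.eval (E.res a) (Polynomial.derivative (q.map E.res)) ≠ 0)
    (ha : E.tO ^ (m + 1) ∣ q.eval a - Y) :
    E.tO ^ m ∣ Y - q.eval x ↔ E.tO ^ m ∣ x - a := by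
  obtain ⟨g, hg, hq⟩ := E.exists_slope q hx
  have hu : IsUnit g := E.isUnit_of_res_ne_zero (by rwa [hg])
  have ha' : E.tO ^ m ∣ q.eval a - Y := (pow_dvd_pow _ (Nat.le_succ m)).trans ha
  have : Y - q.eval x = -(q.eval a - Y) - (x - a) * g := by rw [hq]; ring
  rw [this, dvd_sub_right (by rwa [dvd_neg]), hu.dvd_mul_right]

/-- If `x - a = t^m u` and `Y - q(x) = t^m z`, then `z` has residue `-q̄′(ā) ū`. -/
lemma res_quotient (q : Polynomial E.O) {a x Y u z : E.O} {m : ℕ} (hx : E.res x = E.res a)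
    (ha : E.tO ^ (m + 1) ∣ q.eval a - Y)
    (hu : x - a = E.tO ^ m * u) (hz : Y - q.eval x = E.tO ^ m * z) :
    E.res z = -(Polynomial.eval (E.res a) (Polynomial.derivative (q.map E.res))) * E.res u := by
  obtain ⟨g, hg, hq⟩ := E.exists_slope q hx
  obtain ⟨w, hw⟩ := ha
  have h1 : E.tO ^ m * z = E.tO ^ m * (-(E.tO * w) - u * g) := by
    rw [← hz, hq, hu]
    linear_combination -hw
  have h2 := mul_left_cancel₀ (pow_ne_zero m E.tO_ne_zero) h1
  rw [h2, map_sub, map_neg, map_mul, map_mul, res_tO, hg]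
  ring

/-- The set of simple solutions `ω` of `p(ω) = v`. -/
def simpleFibre (p : Polynomial K) (v : K) : Set K :=
  {ω : K | Polynomial.eval ω p = v ∧ Polynomial.eval ω (Polynomial.derivative p) ≠ 0}

lemma simpleFibre_finite {p : Polynomial K} (hp : Polynomial.derivative p ≠ 0) (v : K) :
    (simpleFibre p v).Finite := by
  have hne : p - Polynomial.C v ≠ 0 := fun h => hp (by
    rw [sub_eq_zero.1 h, Polynomial.derivative_C])
  refine (p - Polynomial.C v).roots.toFinset.finite_toSet.subset fun ω hω => ?_
  simp [Polynomial.mem_roots hne, hω.1]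

lemma PhiNS_eq_zero (f : K × K → ℂ) (m : ℕ) (q : Polynomial E.O) (y : E.Fc)
    (hy : E.t ^ m * y ∉ E.O) (x : E.Fc) : E.PhiNS f (-(m : ℤ)) q x y = 0 := by
  unfold PhiNS Phi lift0₂
  split_ifs with h1 h2
  · exfalso
    apply hy
    lift x to E.O using h1.1
    rw [eval_coe] at h2
    have := E.O.add_mem (E.O.mul_mem (E.O.pow_mem E.ht m) h2.2) (q.eval x).2
    convert this using 1
    have := pow_ne_zero m E.t_ne_zero
    rw [zpow_neg, zpow_natCast]
    field_simp
    ring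
  all_goals rfl

/-- Each `x`-section of `Φ_ns` is a finite sum of lifts, one for each simple solution `ω` of
`q̄(ω) = v`, centred at a Hensel lift of `ω`. -/
lemma PhiNS_section (f : K × K → ℂ) (m : ℕ) (hm : m ≠ 0) (q : Polynomial E.O)
    (hq' : Polynomial.derivative (q.map E.res) ≠ 0) (Y : E.O) :
    ∃ a : K → E.Fc, ∀ x, E.PhiNS f (-(m : ℤ)) q x (E.t ^ (-(m : ℤ)) * Y) =
      ∑ ω ∈ (simpleFibre_finite hq' (E.res Y)).toFinset,
        E.liftAt (fun u => f (ω, -(Polynomial.eval ω (Polynomial.derivative (q.map E.res))) * u))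
          (a ω) (m : ℤ) x := by
  have hex : ∀ ω : K, ∃ a : E.O, ω ∈ simpleFibre (q.map E.res) (E.res Y) →
      E.res a = ω ∧ E.tO ^ (m + 1) ∣ q.eval a - Y := fun ω => by
    by_cases h : ω ∈ simpleFibre (q.map E.res) (E.res Y)
    · obtain ⟨a, ha⟩ := E.exists_lift_root q Y ω h.1 h.2 m
      exact ⟨a, fun _ => ha⟩
    · exact ⟨0, fun h' => absurd h' h⟩
  choose a ha using hex
  refine ⟨fun ω => a ω, fun x => ?_⟩
  have hdvd : ∀ {b z : E.O}, E.tO ^ m ∣ b - z → E.res b = E.res z := fun {b z} h => by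
    have := (E.res_eq_zero_iff _).2 ((dvd_pow_self E.tO hm).trans h)
    rwa [map_sub, sub_eq_zero] at this
  by_cases hx : x ∈ E.O
  · lift x to E.O using hx
    have hphi : E.Phi f (-(m : ℤ)) q x (E.t ^ (-(m : ℤ)) * Y) =
        E.lift0 (fun z => f (E.res x, z)) (E.t ^ (-(m : ℤ)) * ((Y - q.eval x : E.O) : E.Fc)) := by
      unfold Phi lift0₂ lift0
      rw [eval_coe, resF_coe]
      simp [mul_sub]
    have hlift : ∀ ω, ∀ g : K → ℂ, E.liftAt g (a ω) (m : ℤ) x =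
        E.lift0 g (E.t ^ (-(m : ℤ)) * ((x - a ω : E.O) : E.Fc)) := fun ω g => by
      simp [liftAt]
    have hlift0 : ∀ (g : K → ℂ) (z : E.O), ¬ E.tO ^ m ∣ z →
        E.lift0 g (E.t ^ (-(m : ℤ)) * (z : E.Fc)) = 0 := fun g z hz => by
      unfold lift0
      rw [if_neg fun h => hz (E.dvd_of_scale_mem h)]
    simp only [hlift]
    -- only the term indexed by the residue of `x` can survive
    have hother : ∀ ω ∈ simpleFibre (q.map E.res) (E.res Y), ω ≠ E.res x → ∀ g : K → ℂ,
        E.lift0 g (E.t ^ (-(m : ℤ)) * ((x - a ω : E.O) : E.Fc)) = 0 := fun ω hω hne g => by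
      refine hlift0 _ _ fun h => hne ?_
      rw [hdvd h, (ha ω hω).1]
    by_cases hS : E.res x ∈ simpleFibre (q.map E.res) (E.res Y)
    · rw [Finset.sum_eq_single (E.res x)
        (fun ω hω hne => hother ω ((Set.Finite.mem_toFinset _).1 hω) hne _)
        (fun h => absurd ((Set.Finite.mem_toFinset _).2 hS) h)]
      have h1 : E.PhiNS f (-(m : ℤ)) q x (E.t ^ (-(m : ℤ)) * Y) =
          E.Phi f (-(m : ℤ)) q x (E.t ^ (-(m : ℤ)) * Y) := by
        unfold PhiNS
        rw [if_pos ⟨x.2, by rw [resF_coe]; exact hS.2⟩]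
      rw [h1, hphi]
      obtain ⟨hres, hroot⟩ := ha _ hS
      have hd : Polynomial.eval (E.res (a (E.res x)))
          (Polynomial.derivative (q.map E.res)) ≠ 0 := by rw [hres]; exact hS.2
      have hiff := E.dvd_iff_dvd q hres.symm hd hroot
      by_cases hdv : E.tO ^ m ∣ x - a (E.res x)
      · obtain ⟨z, hz⟩ := hiff.2 hdv
        obtain ⟨u, hu⟩ := hdv
        have hzu := E.res_quotient q hres.symm hroot hu hz
        rw [hz, hu, scale_eq, scale_eq, lift0_coe, lift0_coe, hzu, hres]
      · rw [hlift0 _ _ hdv, hlift0 _ _ fun h => hdv (hiff.1 h)]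
    · rw [Finset.sum_eq_zero fun ω hω => hother ω ((Set.Finite.mem_toFinset _).1 hω)
        (fun h => hS (h ▸ (Set.Finite.mem_toFinset _).1 hω)) _]
      unfold PhiNS
      split_ifs with h
      · rw [hphi]
        refine hlift0 _ _ fun hd => hS ⟨?_, by simpa only [resF_coe] using h.2⟩
        rw [eval_res, hdvd hd]
      · rfl
  · rw [PhiNS, if_neg fun h => hx h.1, Finset.sum_eq_zero]
    intro ω _
    unfold liftAt lift0
    rw [if_neg fun h => hx ?_]
    have := E.O.add_mem (E.O.mul_mem (E.O.pow_mem E.ht m) h) (a ω).2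
    convert this using 1
    have := pow_ne_zero m E.t_ne_zero
    rw [zpow_neg, zpow_natCast]
    field_simp
    ring

end CDVF

end Algebra

section Integration

/-! ### Integrals of lifts and the Haar modulus -/

namespace CDVF

variable {K : Type} [NontriviallyNormedField K] (E : CDVF K)

lemma liftAt_zero_zero (g : K → ℂ) : E.liftAt g 0 0 = E.lift0 g := by
  funext x; simp [liftAt]

lemma absF_unit_mul {u : E.O} (hu : E.res u ≠ 0) (n : ℤ) :
    E.absF ((u : E.Fc) * E.t ^ n) =
      algebraMap ℂ CX ((‖E.res u‖ : ℝ) : ℂ) * RatFunc.X ^ n := by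
  unfold absF
  rw [E.ν_eq hu, mul_assoc, ← zpow_add₀ E.t_ne_zero, add_neg_cancel, zpow_zero, mul_one,
    resF_coe]

variable [MeasurableSpace K] {μ : Measure K}

lemma liftAt_mem_LF {g : K → ℂ} (hg : Integrable g μ) (a : E.Fc) (n : ℤ) :
    E.liftAt g a n ∈ E.LF μ :=
  Submodule.subset_span ⟨g, hg, a, n, rfl⟩

variable {E} {I : (E.Fc → CX) →ₗ[CX] CX}

lemma IsIntegralF.liftAt (hI : E.IsIntegralF μ I) {g : K → ℂ} (hg : Integrable g μ)
    (a : E.Fc) (n : ℤ) :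
    I (E.liftAt g a n) = RatFunc.X ^ n * algebraMap ℂ CX (∫ u, g u ∂μ) := by
  have h1 := hI.2.1 _ (E.liftAt_mem_LF hg 0 n) (-a)
  have h2 := hI.2.2 _ (E.liftAt_mem_LF hg 0 0) (E.t ^ (-n)) (zpow_ne_zero _ E.t_ne_zero)
  have e1 : (fun x => E.liftAt g 0 n (x + -a)) = E.liftAt g a n := by
    funext x; simp [CDVF.liftAt, sub_eq_add_neg]
  have e2 : (fun x => E.liftAt g 0 0 (E.t ^ (-n) * x)) = E.liftAt g 0 n := by
    funext x; simp [CDVF.liftAt]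
  have e3 : E.absF (E.t ^ (-n)) = RatFunc.X ^ (-n) := by
    have := E.absF_unit_mul (u := 1) (by simp) (-n)
    simpa using this
  rw [e1] at h1
  rw [e2, liftAt_zero_zero, hI.1 g hg, e3, ← zpow_neg, neg_neg] at h2
  rw [h1, h2]

/-- The dilation axiom of the integral on `F`, applied to units, forces the norm of `K` to be
the Haar modulus. -/
lemma IsIntegralF.integral_dilate (hI : E.IsIntegralF μ I) {g : K → ℂ} (hg : Integrable g μ)
    {c : K} (hc : c ≠ 0) (hgc : Integrable (fun u => g (c * u)) μ) :
    ∫ u, g (c * u) ∂μ = ((‖c‖ : ℝ) : ℂ)⁻¹ * ∫ u, g u ∂μ := by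
  obtain ⟨u, rfl⟩ := E.hres_surj c
  have hu : (u : E.Fc) ≠ 0 := fun h => hc (by
    have : u = 0 := Subtype.ext h
    simp [this])
  have h2 := hI.2.2 _ (E.liftAt_mem_LF hg 0 0) u hu
  have h3 : E.absF (u : E.Fc) = algebraMap ℂ CX ((‖E.res u‖ : ℝ) : ℂ) := by
    simpa using E.absF_unit_mul hc 0
  obtain ⟨w, hw⟩ := (E.isUnit_of_res_ne_zero hc).exists_left_inv
  have e2 : (fun x => E.liftAt g 0 0 ((u : E.Fc) * x)) =
      E.lift0 fun v => g (E.res u * v) := by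
    funext x
    rw [liftAt_zero_zero]
    by_cases hx : x ∈ E.O
    · lift x to E.O using hx
      rw [← Subring.coe_mul, lift0_coe, lift0_coe, map_mul]
    · unfold lift0
      rw [if_neg hx, if_neg fun h => hx ?_]
      have h4 := E.O.mul_mem w.2 h
      have h5 : (w : E.Fc) * u = 1 := by exact_mod_cast congrArg Subtype.val hw
      rwa [← mul_assoc, h5, one_mul] at h4
  rw [e2, liftAt_zero_zero, hI.1 g hg, hI.1 _ hgc, h3, ← map_inv₀, ← map_mul] at h2
  exact (algebraMap ℂ CX).injective h2

end CDVF

end Integration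

section AreaFormula

/-! ### The area formula over a nonarchimedean field -/

open Metric Filter Topology

/-- In an ultrametric space an open set covered by arbitrarily chosen small balls with a property
`P` is partitioned by such balls: take around each point the largest dyadic ball satisfying `P`. -/
lemma exists_ball_partition {K : Type*} [MetricSpace K] [IsUltrametricDist K]
    [TopologicalSpace.SeparableSpace K] (U : Set K) (P : Set K → Prop)
    (hP : ∀ x ∈ U, ∃ n : ℕ, P (ball x ((1 / 2) ^ n))) (hPU : ∀ B, P B → B ⊆ U) :
    ∃ S : Set (Set K), S.Countable ∧ S.PairwiseDisjoint id ∧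
      (∀ B ∈ S, P B ∧ IsOpen B) ∧ ⋃₀ S = U := by
  let n : U → ℕ := fun x => Nat.find (hP x x.2)
  have hn : ∀ x : U, P (ball (x : K) ((1 / 2) ^ n x)) := fun x => Nat.find_spec (hP x x.2)
  have hpos : ∀ k : ℕ, (0 : ℝ) < (1 / 2) ^ k := fun k => by positivity
  have hle : ∀ x y : U, (y : K) ∈ ball (x : K) ((1 / 2) ^ n x) → n y ≤ n x := fun x y h =>
    Nat.find_min' (hP y y.2) (by rw [← IsUltrametricDist.ball_eq_of_mem h]; exact hn x)
  have heq : ∀ x y : U, (y : K) ∈ ball (x : K) ((1 / 2) ^ n x) →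
      ball (y : K) ((1 / 2) ^ n y) = ball (x : K) ((1 / 2) ^ n x) := fun x y h => by
    have h1 := hle x y h
    have h2 : (x : K) ∈ ball (y : K) ((1 / 2) ^ n y) := by
      rw [mem_ball, dist_comm]
      exact lt_of_lt_of_le h (pow_le_pow_of_le_one (by norm_num) (by norm_num) h1)
    rw [le_antisymm h1 (hle y x h2), IsUltrametricDist.ball_eq_of_mem h]
  have hdisj : (Set.range fun x : U => ball (x : K) ((1 / 2) ^ n x)).PairwiseDisjoint id := by
    rintro _ ⟨x, rfl⟩ _ ⟨y, rfl⟩ hne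
    refine Set.disjoint_left.2 fun z hzx hzy => hne ?_
    simp only [id] at hzx hzy
    have hz : z ∈ U := hPU _ (hn x) hzx
    exact (heq x ⟨z, hz⟩ hzx).symm.trans (heq y ⟨z, hz⟩ hzy)
  refine ⟨_, hdisj.countable_of_isOpen ?_ ?_, hdisj, ?_, ?_⟩
  · rintro _ ⟨x, rfl⟩; exact isOpen_ball
  · rintro _ ⟨x, rfl⟩; exact ⟨x, mem_ball_self (hpos _)⟩
  · rintro _ ⟨x, rfl⟩; exact ⟨hn x, isOpen_ball⟩
  · ext z
    constructor
    · rintro ⟨_, ⟨x, rfl⟩, hz⟩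
      exact hPU _ (hn x) hz
    · intro hz
      exact ⟨_, ⟨⟨z, hz⟩, rfl⟩, mem_ball_self (hpos _)⟩

lemma integrable_of_hasSum {α ι : Type*} [MeasurableSpace α] {μ : Measure α} [Countable ι]
    {F : ι → α → ℂ} {G : α → ℂ} (hF : ∀ i, Integrable (F i) μ)
    (hs : Summable fun i => ∫ a, ‖F i a‖ ∂μ) (h : ∀ a, HasSum (fun i => F i a) (G a)) :
    Integrable G μ := by
  refine ⟨?_, ?_⟩
  · refine aestronglyMeasurable_of_tendsto_ae (atTop : Filter (Finset ι))
      (f := fun s a => ∑ i ∈ s, F i a) (fun s => ?_) (ae_of_all _ fun a => ?_)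
    · exact (integrable_finsetSum s fun i _ => hF i).1
    · have := h a
      rwa [HasSum, SummationFilter.unconditional_filter] at this
  · have h1 : ∀ i, ∫⁻ a, ‖F i a‖ₑ ∂μ = ENNReal.ofReal (∫ a, ‖F i a‖ ∂μ) := fun i =>
      (ofReal_integral_norm_eq_lintegral_enorm (hF i)).symm
    calc ∫⁻ a, ‖G a‖ₑ ∂μ ≤ ∫⁻ a, ∑' i, ‖F i a‖ₑ ∂μ := by
          refine lintegral_mono fun a => ?_
          rw [← (h a).tsum_eq]
          exact enorm_tsum_le_tsum_enorm
      _ = ∑' i, ∫⁻ a, ‖F i a‖ₑ ∂μ := lintegral_tsum fun i => (hF i).1.enorm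
      _ < ⊤ := by
          simp only [h1]
          exact hs.tsum_ofReal_lt_top

variable {K : Type} [NontriviallyNormedField K]

/-- Quantitative inverse function theorem in the ultrametric setting: near a point where `p′` does
not vanish, `p` is injective, `‖p′‖` is constant, and `p` maps small balls exactly onto balls
scaled by `‖p′‖`. -/
lemma exists_good_radius [IsUltrametricDist K] [CompleteSpace K] (p : Polynomial K) (x : K)
    (hx : p.derivative.eval x ≠ 0) :
    ∃ δ > 0, ∀ r, 0 < r → r ≤ δ →
      (∀ y ∈ ball x r, ‖p.derivative.eval y‖ = ‖p.derivative.eval x‖) ∧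
      Set.InjOn (fun y => p.eval y) (ball x r) ∧
      (fun y => p.eval y) '' ball x r = ball (p.eval x) (‖p.derivative.eval x‖ * r) := by
  set c := p.derivative.eval x with hc
  have hc0 : 0 < ‖c‖ := norm_pos_iff.2 hx
  have h1 : ∀ᶠ y in 𝓝 x, ‖p.derivative.eval y - c‖ < ‖c‖ := by
    have : Tendsto (fun y => ‖p.derivative.eval y - c‖) (𝓝 x) (𝓝 ‖c - c‖) :=
      ((p.derivative.continuous.tendsto x).sub_const c).norm
    rw [sub_self, norm_zero] at this
    exact this.eventually_lt_const hc0
  have h2 : ∀ᶠ z in 𝓝 (x, x), ‖p.eval z.1 - p.eval z.2 - (z.1 - z.2) * c‖ ≤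
      ‖c‖ / 2 * ‖z.1 - z.2‖ := by
    have := (p.hasStrictDerivAt x).hasStrictFDerivAt.isLittleO.def (half_pos hc0)
    simpa [hc] using this
  obtain ⟨δ₁, hδ₁, H1⟩ := Metric.eventually_nhds_iff_ball.1 h1
  obtain ⟨δ₂, hδ₂, H2⟩ := Metric.eventually_nhds_iff_ball.1 h2
  refine ⟨min δ₁ δ₂, lt_min hδ₁ hδ₂, fun r hr hrδ => ?_⟩
  have hlin : ∀ y ∈ ball x r, ∀ z ∈ ball x r,
      ‖p.eval y - p.eval z - (y - z) * c‖ ≤ ‖c‖ / 2 * ‖y - z‖ := fun y hy z hz => by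
    refine H2 (y, z) ?_
    rw [← ball_prod_same]
    have := hrδ.trans (min_le_right _ _)
    exact ⟨ball_subset_ball this hy, ball_subset_ball this hz⟩
  have hxr : x ∈ ball x r := mem_ball_self hr
  refine ⟨fun y hy => ?_, fun y hy z hz hyz => ?_, ?_⟩
  · have := H1 y (ball_subset_ball (hrδ.trans (min_le_left _ _)) hy)
    rw [← norm_neg c]
    refine IsUltrametricDist.norm_eq_of_add_norm_lt_max ?_
    rw [← sub_eq_add_neg, norm_neg]
    exact this.trans_le (le_max_right _ _)
  · have := hlin y hy z hz
    simp only at hyz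
    rw [hyz, sub_self, zero_sub, norm_neg, norm_mul] at this
    have h3 : ‖y - z‖ = 0 := by nlinarith [norm_nonneg (y - z)]
    exact sub_eq_zero.1 (norm_eq_zero.1 h3)
  · apply Set.Subset.antisymm
    · rintro _ ⟨y, hy, rfl⟩
      have h3 := hlin y hy x hxr
      rw [mem_ball, dist_eq_norm] at hy ⊢
      have h4 : p.eval y - p.eval x = (p.eval y - p.eval x - (y - x) * c) + (y - x) * c := by
        ring
      rw [h4]
      refine (IsUltrametricDist.norm_add_le_max _ _).trans_lt (max_lt ?_ ?_)
      · nlinarith [norm_nonneg (y - x)]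
      · rw [norm_mul, mul_comm]; gcongr
    · intro v hv
      rw [mem_ball, dist_eq_norm] at hv
      -- a preimage of `v` is a fixed point of the Newton map with frozen slope `c`
      let T : K → K := fun y => y - (p.eval y - v) / c
      have hT : ∀ y z, T y - T z = -((p.eval y - p.eval z - (y - z) * c) / c) := fun y z => by
        simp only [T]; field_simp; ring
      have hTn : ∀ y ∈ ball x r, ∀ z ∈ ball x r, ‖T y - T z‖ ≤ 1 / 2 * ‖y - z‖ :=
        fun y hy z hz => by
          rw [hT, norm_neg, norm_div, div_le_iff₀ hc0]
          linarith [hlin y hy z hz]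
      have hmaps : Set.MapsTo T (ball x r) (ball x r) := fun y hy => by
        have h3 := hTn y hy x hxr
        rw [mem_ball, dist_eq_norm] at hy ⊢
        have h4 : T y - x = (T y - T x) + (v - p.eval x) / c := by
          simp only [T]; field_simp; ring
        rw [h4]
        refine (IsUltrametricDist.norm_add_le_max _ _).trans_lt (max_lt ?_ ?_)
        · linarith [norm_nonneg (y - x)]
        · rw [norm_div, div_lt_iff₀ hc0]; linarith
      have hcontr : ContractingWith (1 / 2) (hmaps.restrict T (ball x r) (ball x r)) := by
        refine ⟨by norm_num, LipschitzWith.of_dist_le_mul fun y z => ?_⟩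
        have := hTn y y.2 z z.2
        simpa [Subtype.dist_eq, dist_eq_norm] using this
      obtain ⟨y, hy, hfix, -⟩ := hcontr.exists_fixedPoint'
        (IsUltrametricDist.isClosed_ball x r).isComplete hmaps hxr (edist_ne_top _ _)
      refine ⟨y, hy, ?_⟩
      have h5 : (p.eval y - v) / c = 0 := by simpa [T, Function.IsFixedPt] using hfix
      rcases div_eq_zero_iff.1 h5 with h | h
      · exact sub_eq_zero.1 h
      · exact absurd h hx

variable [MeasurableSpace K] [BorelSpace K] [ProperSpace K]

/-- Area formula over a nonarchimedean field, for a uniformly locally constant integrand. -/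
lemma area_formula [IsUltrametricDist K] (μ : Measure K) [Measure.IsAddHaarMeasure μ]
    (hμ : ∀ c : K, c ≠ 0 → ∀ r : ℝ, 0 < r →
      μ.real (ball 0 (‖c‖ * r)) = ‖c‖ * μ.real (ball (0 : K) r))
    {p : Polynomial K} (hp : p.derivative ≠ 0) {φ : K → ℂ} (hφ : Integrable φ μ)
    {ε : ℝ} (hε : 0 < ε) (hloc : ∀ x y, dist y x < ε → φ y = φ x) :
    Integrable (fun v => ∑ ω ∈ (CDVF.simpleFibre_finite hp v).toFinset,
      ((‖p.derivative.eval ω‖ : ℝ) : ℂ)⁻¹ * φ ω) μ ∧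
    ∫ v, ∑ ω ∈ (CDVF.simpleFibre_finite hp v).toFinset,
      ((‖p.derivative.eval ω‖ : ℝ) : ℂ)⁻¹ * φ ω ∂μ = ∫ ω, φ ω ∂μ := by
  let U : Set K := {x | p.derivative.eval x ≠ 0}
  let P : Set K → Prop := fun B => B ⊆ U ∧ Set.InjOn (fun y => p.eval y) B ∧
    MeasurableSet ((fun y => p.eval y) '' B) ∧ μ ((fun y => p.eval y) '' B) ≠ ⊤ ∧
    ∃ (w : ℂ) (d : ℝ), 0 < d ∧ (∀ y ∈ B, φ y = w ∧ ‖p.derivative.eval y‖ = d) ∧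
      μ.real ((fun y => p.eval y) '' B) = d * μ.real B
  have hP : ∀ x ∈ U, ∃ n : ℕ, P (ball x ((1 / 2) ^ n)) := fun x hx => by
    obtain ⟨δ, hδ, H⟩ := exists_good_radius p x hx
    obtain ⟨n, hn⟩ := exists_pow_lt_of_lt_one (lt_min hδ hε) (by norm_num : (1 / 2 : ℝ) < 1)
    have hc0 : 0 < ‖p.derivative.eval x‖ := norm_pos_iff.2 hx
    obtain ⟨h1, h2, h3⟩ := H _ (by positivity) (hn.le.trans (min_le_left _ _))
    have htr : ∀ (z : K) (r : ℝ), μ.real (ball z r) = μ.real (ball 0 r) := fun z r => by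
      rw [measureReal_def, measureReal_def, Measure.addHaar_ball_center]
    refine ⟨n, fun y hy => ?_, h2, ?_, ?_, φ x,
      ‖p.derivative.eval x‖, hc0, fun y hy => ⟨?_, h1 y hy⟩, ?_⟩
    · have := h1 y hy
      exact norm_pos_iff.1 (this ▸ hc0)
    · rw [h3]; exact measurableSet_ball
    · rw [h3]; exact measure_ball_lt_top.ne
    · exact hloc x y (lt_of_lt_of_le hy (hn.le.trans (min_le_right _ _)))
    · rw [h3, htr (p.eval x), htr x]
      exact hμ _ hx _ (by positivity)
  obtain ⟨S, hSc, hSd, hS, hSU⟩ := exists_ball_partition U P hP fun B hB => hB.1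
  have : Countable S := hSc.to_subtype
  choose hsub hinj hmeas hfin w d hd hwd hvol using fun B : S => (hS B B.2).1
  have hU : U =ᵐ[μ] Set.univ := by
    have hfinite : (Uᶜ).Finite := by
      refine p.derivative.roots.toFinset.finite_toSet.subset fun ω hω => ?_
      have : p.derivative.eval ω = 0 := by simpa [U] using hω
      simp [Polynomial.mem_roots hp, this]
    rw [ae_eq_univ]
    exact hfinite.measure_zero μ
  have hUi : ⋃ B : S, (B : Set K) = U := by rw [← hSU, Set.sUnion_eq_iUnion]
  have hdisj : Pairwise (Function.onFun Disjoint fun B : S => (B : Set K)) := fun B C hBC =>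
    hSd B.2 C.2 (fun h => hBC (Subtype.ext h))
  have hsplit : ∀ {ψ : K → ℂ}, Integrable ψ μ →
      HasSum (fun B : S => ∫ x in (B : Set K), ψ x ∂μ) (∫ x, ψ x ∂μ) := fun {ψ} hψ => by
    have := hasSum_integral_iUnion (fun B : S => (hS B B.2).2.measurableSet) hdisj
      (f := ψ) hψ.integrableOn
    rwa [hUi, setIntegral_congr_set hU, setIntegral_univ] at this
  let h : K → ℂ := fun ω => ((‖p.derivative.eval ω‖ : ℝ) : ℂ)⁻¹ * φ ω
  -- the part of the fibre sum coming from the ball `B`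
  let F : S → K → ℂ := fun B v => ∑ ω ∈ (CDVF.simpleFibre_finite hp v).toFinset,
    if ω ∈ (B : Set K) then h ω else 0
  have hFeq : ∀ B : S, F B = ((fun y => p.eval y) '' (B : Set K)).indicator
      fun _ => ((d B : ℝ) : ℂ)⁻¹ * w B := fun B => by
    funext v
    simp only [F]
    by_cases hv : v ∈ (fun y => p.eval y) '' (B : Set K)
    · rw [Set.indicator_of_mem hv]
      obtain ⟨ω, hω, rfl⟩ := hv
      rw [Finset.sum_eq_single ω]
      · rw [if_pos hω]
        simp only [h]
        rw [(hwd B ω hω).1, (hwd B ω hω).2]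
      · intro ω' hω' hne
        rw [if_neg fun hB => hne ?_]
        exact hinj B hB hω ((Set.Finite.mem_toFinset _).1 hω').1
      · exact fun h => absurd ((Set.Finite.mem_toFinset
          (CDVF.simpleFibre_finite hp _)).2 ⟨rfl, hsub B hω⟩) h
    · rw [Set.indicator_of_notMem hv]
      refine Finset.sum_eq_zero fun ω hω => if_neg fun hB => hv ⟨ω, hB, ?_⟩
      exact ((Set.Finite.mem_toFinset _).1 hω).1
  have hFint : ∀ B, Integrable (F B) μ := fun B => by
    rw [hFeq, integrable_indicator_iff (hmeas B)]
    exact integrableOn_const (hfin B)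
  have hset : ∀ B : S, ∫ x in (B : Set K), φ x ∂μ = μ.real (B : Set K) * w B := fun B => by
    rw [setIntegral_congr_fun (hS B B.2).2.measurableSet fun y hy => (hwd B y hy).1]
    simp
  have hset' : ∀ B : S, ∫ x in (B : Set K), ((‖φ x‖ : ℝ) : ℂ) ∂μ =
      ((μ.real (B : Set K) * ‖w B‖ : ℝ) : ℂ) := fun B => by
    rw [setIntegral_congr_fun (g := fun _ => ((‖w B‖ : ℝ) : ℂ)) (hS B B.2).2.measurableSet
      fun y hy => by simp only [(hwd B y hy).1]]
    simp
  have hFI : ∀ B, ∫ v, F B v ∂μ = ∫ x in (B : Set K), φ x ∂μ := fun B => by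
    rw [hset, hFeq, integral_indicator_const _ (hmeas B)]
    rw [hvol, Complex.real_smul]
    have : (d B : ℂ) ≠ 0 := by exact_mod_cast (hd B).ne'
    push_cast
    field_simp
  have hFN : ∀ B, ∫ v, ‖F B v‖ ∂μ = μ.real (B : Set K) * ‖w B‖ := fun B => by
    rw [hFeq]
    simp only [norm_indicator_eq_indicator_norm]
    rw [integral_indicator_const _ (hmeas B), hvol, norm_mul, norm_inv, Complex.norm_real,
      Real.norm_of_nonneg (hd B).le, smul_eq_mul]
    have := hd B
    field_simp
  have hsum : Summable fun B => ∫ v, ‖F B v‖ ∂μ := by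
    have : HasSum (fun B : S => ∫ x in (B : Set K), ((‖φ x‖ : ℝ) : ℂ) ∂μ) _ :=
      hsplit hφ.norm.ofReal
    replace this := this.summable
    simp only [hset'] at this
    simp only [hFN]
    exact Complex.summable_ofReal.1 this
  have hG : ∀ v, HasSum (fun B => F B v)
      (∑ ω ∈ (CDVF.simpleFibre_finite hp v).toFinset, h ω) := fun v => by
    refine hasSum_sum fun ω hω => ?_
    have hωU : ω ∈ ⋃ B : S, (B : Set K) := by
      rw [hUi]; exact ((Set.Finite.mem_toFinset _).1 hω).2
    obtain ⟨B, hB⟩ := Set.mem_iUnion.1 hωU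
    have := hasSum_single (f := fun C : S => if ω ∈ (C : Set K) then h ω else 0) B
      fun C hC => if_neg fun hωC => Set.disjoint_left.1 (hdisj hC) hωC hB
    simpa only [if_pos hB] using this
  refine ⟨integrable_of_hasSum hFint hsum hG, ?_⟩
  have h1 := hasSum_integral_of_summable_integral_norm hFint hsum
  simp only [fun v => (hG v).tsum_eq, hFI] at h1
  exact h1.unique (hsplit hφ)

end AreaFormula

section SchwartzBruhat

/-! ### Schwartz–Bruhat functions and their fibre integrals -/

open Metric

variable {K : Type} [NontriviallyNormedField K] {f : K × K → ℂ}

/-- Uniform local constancy. -/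
lemma IsSB.exists_radius (hf : IsSB f) :
    ∃ ε > 0, ∀ x y : K × K, dist y x < ε → f y = f x := by
  obtain ⟨ε, hε, H⟩ := lebesgue_number_lemma_of_metric (s := tsupport f)
    (c := fun z : ℂ => f ⁻¹' {z}) hf.2 (fun z => hf.1.isOpen_fiber z)
    (fun x _ => Set.mem_iUnion.2 ⟨f x, rfl⟩)
  have key : ∀ x y : K × K, x ∈ tsupport f → dist y x < ε → f y = f x := fun x y hx hyx => by
    obtain ⟨z, hz⟩ := H x hx
    have h1 : f x = z := hz (mem_ball_self hε)
    have h2 : f y = z := hz hyx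
    rw [h1, h2]
  refine ⟨ε, hε, fun x y hyx => ?_⟩
  by_cases hx : x ∈ tsupport f
  · exact key x y hx hyx
  by_cases hy : y ∈ tsupport f
  · exact (key y x hy (by rwa [dist_comm])).symm
  · rw [image_eq_zero_of_notMem_tsupport hx, image_eq_zero_of_notMem_tsupport hy]

lemma IsSB.exists_bound (hf : IsSB f) : ∃ M, ∀ x : K × K, f x ≠ 0 → ‖x‖ ≤ M := by
  obtain ⟨M, hM⟩ := hf.2.isCompact.isBounded.exists_norm_le
  exact ⟨M, fun x hx => hM x (subset_tsupport f hx)⟩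

/-- A nonzero locally constant function of compact support can only exist if the norm is
ultrametric: its periods contain a ball and are bounded, so the integers are bounded in `K`. -/
lemma IsSB.isUltrametricDist (hf : IsSB f) {x : K × K} (hx : f x ≠ 0) : IsUltrametricDist K := by
  obtain ⟨ε, hε, H⟩ := hf.exists_radius
  obtain ⟨M, hM⟩ := hf.exists_bound
  obtain ⟨d, hd0, hd⟩ := NormedField.exists_norm_lt K hε
  have hper : ∀ n : ℕ, f (x + ((n : K) * d, 0)) = f x := fun n => by
    induction n with
    | zero => rw [Nat.cast_zero, zero_mul, Prod.mk_zero_zero, add_zero]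
    | succ n ih =>
      rw [← ih]
      refine H _ _ ?_
      rw [dist_eq_norm]
      have : x + (((n + 1 : ℕ) : K) * d, 0) - (x + ((n : K) * d, 0)) = (d, 0) := by
        ext <;> simp; ring
      rw [this]
      rw [Prod.norm_mk, norm_zero]
      exact max_lt hd hε
  have hbd : ∀ n : ℕ, ‖(n : K)‖ ≤ (M + M) / ‖d‖ := fun n => by
    rw [le_div_iff₀ hd0, ← norm_mul]
    have h1 := hM _ (by rw [hper n]; exact hx)
    have h2 := hM _ hx
    have h3 : (((n : K) * d, 0) : K × K) = (x + ((n : K) * d, 0)) - x := by simp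
    calc ‖(n : K) * d‖ ≤ ‖(((n : K) * d, 0) : K × K)‖ := norm_fst_le (((n : K) * d, 0) : K × K)
      _ ≤ ‖x + ((n : K) * d, 0)‖ + ‖x‖ := (congrArg norm h3).trans_le (norm_sub_le _ _)
      _ ≤ M + M := add_le_add h1 h2
  refine IsUltrametricDist.isUltrametricDist_of_forall_norm_natCast_le_one fun n => ?_
  by_contra! hn
  obtain ⟨k, hk⟩ := pow_unbounded_of_one_lt ((M + M) / ‖d‖) hn
  have := hbd (n ^ k)
  rw [Nat.cast_pow, norm_pow] at this
  exact absurd this (not_le.2 hk)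

lemma IsSB.integral_section_eq [MeasurableSpace K] (μ : Measure K) (hf : IsSB f) :
    ∃ ε > 0, ∀ x y : K, dist y x < ε → ∫ u, f (y, u) ∂μ = ∫ u, f (x, u) ∂μ := by
  obtain ⟨ε, hε, H⟩ := hf.exists_radius
  refine ⟨ε, hε, fun x y hyx => ?_⟩
  refine integral_congr_ae (ae_of_all _ fun u => H _ _ ?_)
  rw [Prod.dist_eq, dist_self]
  exact max_lt hyx hε

variable [MeasurableSpace K] [BorelSpace K] [ProperSpace K] (μ : Measure K)
  [Measure.IsAddHaarMeasure μ]

lemma IsSB.integrable_section (hf : IsSB f) (ω : K) {c : K} (hc : c ≠ 0) :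
    Integrable (fun u => f (ω, c * u)) μ := by
  obtain ⟨M, hM⟩ := hf.exists_bound
  have hcont : Continuous fun u => f (ω, c * u) := hf.1.continuous.comp (by fun_prop)
  refine hcont.integrable_of_hasCompactSupport
    (HasCompactSupport.intro (isCompact_closedBall (0 : K) (M / ‖c‖)) fun u hu => ?_)
  by_contra h
  refine hu ?_
  rw [mem_closedBall_zero_iff, le_div_iff₀ (norm_pos_iff.2 hc), mul_comm, ← norm_mul]
  exact (norm_snd_le (ω, c * u)).trans (hM _ h)

lemma IsSB.integrable_integral (hf : IsSB f) : Integrable (fun ω => ∫ u, f (ω, u) ∂μ) μ := by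
  obtain ⟨ε, hε, H⟩ := hf.integral_section_eq μ
  obtain ⟨M, hM⟩ := hf.exists_bound
  have hcont : Continuous fun ω => ∫ u, f (ω, u) ∂μ := by
    refine Metric.continuous_iff.2 fun x δ hδ => ⟨ε, hε, fun y hy => ?_⟩
    rw [H x y hy, dist_self]
    exact hδ
  refine hcont.integrable_of_hasCompactSupport
    (HasCompactSupport.intro (isCompact_closedBall (0 : K) M) fun ω hω => ?_)
  have : ∀ u, f (ω, u) = 0 := fun u => by
    by_contra h
    exact hω (mem_closedBall_zero_iff.2 ((norm_fst_le (ω, u)).trans (hM _ h)))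
  simp [this]

variable {μ} {E : CDVF K} {I : (E.Fc → CX) →ₗ[CX] CX}

lemma CDVF.IsIntegralF.measureReal_ball (hI : E.IsIntegralF μ I) (c : K) (hc : c ≠ 0) (r : ℝ) :
    μ.real (ball 0 (‖c‖ * r)) = ‖c‖ * μ.real (ball (0 : K) r) := by
  have hindic : ∀ s : ℝ, Integrable ((ball (0 : K) s).indicator fun _ => (1 : ℂ)) μ := fun s =>
    (integrable_indicator_iff measurableSet_ball).2 (integrableOn_const measure_ball_lt_top.ne)
  have hcomp : (fun u => (ball (0 : K) (‖c‖ * r)).indicator (fun _ => (1 : ℂ)) (c * u)) =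
      (ball (0 : K) r).indicator fun _ => (1 : ℂ) := by
    funext u
    have : c * u ∈ ball (0 : K) (‖c‖ * r) ↔ u ∈ ball (0 : K) r := by
      rw [mem_ball_zero_iff, mem_ball_zero_iff, norm_mul,
        mul_lt_mul_iff_right₀ (norm_pos_iff.2 hc)]
    simp only [Set.indicator_apply, this]
  have h := hI.integral_dilate (hindic (‖c‖ * r)) hc (by rw [hcomp]; exact hindic r)
  rw [hcomp, integral_indicator_const _ measurableSet_ball,
    integral_indicator_const _ measurableSet_ball, Complex.real_smul, Complex.real_smul,
    mul_one, mul_one] at h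
  have hn : ((‖c‖ : ℝ) : ℂ) ≠ 0 := by exact_mod_cast norm_ne_zero_iff.2 hc
  field_simp at h
  rw [mul_comm ‖c‖ (μ.real _)]
  exact_mod_cast h.symm

/-- The function `v ↦ Σ_ω ∫ f(ω, −p′(ω)u) du`, summed over the simple solutions `ω` of
`p(ω) = v`, is integrable and its integral is the double integral of `f`. -/
lemma IsSB.integral_fibre_sum (hf : IsSB f) (hI : E.IsIntegralF μ I) {p : Polynomial K}
    (hp : p.derivative ≠ 0) :
    Integrable (fun v => ∑ ω ∈ (CDVF.simpleFibre_finite hp v).toFinset,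
      ∫ u, f (ω, -(p.derivative.eval ω) * u) ∂μ) μ ∧
    ∫ v, ∑ ω ∈ (CDVF.simpleFibre_finite hp v).toFinset,
      ∫ u, f (ω, -(p.derivative.eval ω) * u) ∂μ ∂μ = ∫ u, ∫ ω, f (ω, u) ∂μ ∂μ := by
  by_cases h0 : ∃ x, f x ≠ 0
  · obtain ⟨x, hx⟩ := h0
    have := hf.isUltrametricDist hx
    obtain ⟨ε, hε, H⟩ := hf.integral_section_eq μ
    have key := area_formula μ (fun c hc r _ => hI.measureReal_ball c hc r) hp
      (hf.integrable_integral μ) hε H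
    have heq : (fun v => ∑ ω ∈ (CDVF.simpleFibre_finite hp v).toFinset,
        ∫ u, f (ω, -(p.derivative.eval ω) * u) ∂μ) =
        fun v => ∑ ω ∈ (CDVF.simpleFibre_finite hp v).toFinset,
          ((‖p.derivative.eval ω‖ : ℝ) : ℂ)⁻¹ * ∫ u, f (ω, u) ∂μ := by
      funext v
      refine Finset.sum_congr rfl fun ω hω => ?_
      have hc : -(p.derivative.eval ω) ≠ 0 :=
        neg_ne_zero.2 ((Set.Finite.mem_toFinset _).1 hω).2
      have := hI.integral_dilate (g := fun u => f (ω, u))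
        (by simpa using hf.integrable_section μ ω one_ne_zero) hc
        (hf.integrable_section μ ω hc)
      rwa [norm_neg] at this
    rw [heq, ← integral_integral_swap_of_hasCompactSupport (f := fun ω u => f (ω, u))
      hf.1.continuous hf.2]
    exact key
  · push Not at h0
    simp [h0]

end SchwartzBruhat

/-- If q̄′ ≠ 0 then every section x ↦ Φ_ns(x,y) is integrable;
y ↦ ∫^F Φ_ns(x,y) dx is the lift at 0,R of
v ↦ (Σ_{ω : q̄(ω)=v, q̄′(ω)≠0} ∫_K f(ω, −q̄′(ω)u) du)·X^{−R}; this function of y is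
integrable and ∫^F∫^F Φ_ns dx dy = ∫_K∫_K f(ω,u) dω du. -/
theorem statement12 {K : Type} [NontriviallyNormedField K] [MeasurableSpace K] [BorelSpace K]
    [LocallyCompactSpace K] (μ : Measure K) [Measure.IsAddHaarMeasure μ]
    (E : CDVF K) (I : (E.Fc → CX) →ₗ[CX] CX) (hI : E.IsIntegralF μ I)
    (R : ℤ) (hR : R < 0) (q : Polynomial E.O) (hq0 : q.coeff 0 = 0)
    (hqbar : q.map E.res ≠ 0) (f : K × K → ℂ) (hf : IsSB f)
    (hq' : Polynomial.derivative (q.map E.res) ≠ 0) :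
    (∀ y : E.Fc, (fun x => E.PhiNS f R q x y) ∈ E.LF μ) ∧
    ((fun y => I (fun x => E.PhiNS f R q x y)) =
      fun y => E.liftAt (fun v =>
          ∑ᶠ ω ∈ {ω : K | Polynomial.eval ω (q.map E.res) = v ∧
              Polynomial.eval ω (Polynomial.derivative (q.map E.res)) ≠ 0},
            ∫ u, f (ω, -(Polynomial.eval ω (Polynomial.derivative (q.map E.res))) * u) ∂μ)
        0 R y * RatFunc.X ^ (-R)) ∧
    ((fun y => I (fun x => E.PhiNS f R q x y)) ∈ E.LF μ) ∧
    I (fun y => I (fun x => E.PhiNS f R q x y)) =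
      algebraMap ℂ CX (∫ u, ∫ ω, f (ω, u) ∂μ ∂μ) := by
  have : ProperSpace K := ProperSpace.of_locallyCompactSpace K
  obtain ⟨m, rfl⟩ : ∃ m : ℕ, R = -(m : ℤ) := ⟨(-R).toNat, by omega⟩
  have hm : m ≠ 0 := by omega
  obtain ⟨hGint, hGI⟩ := hf.integral_fibre_sum hI hq'
  have hsec : ∀ ω v, ω ∈ (CDVF.simpleFibre_finite hq' v).toFinset → Integrable (fun u =>
      f (ω, -(Polynomial.eval ω (Polynomial.derivative (q.map E.res))) * u)) μ := fun ω v hω =>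
    hf.integrable_section μ ω (neg_ne_zero.2 ((Set.Finite.mem_toFinset _).1 hω).2)
  have hsum : (fun v => ∑ᶠ ω ∈ {ω : K | Polynomial.eval ω (q.map E.res) = v ∧
        Polynomial.eval ω (Polynomial.derivative (q.map E.res)) ≠ 0},
        ∫ u, f (ω, -(Polynomial.eval ω (Polynomial.derivative (q.map E.res))) * u) ∂μ) =
      fun v => ∑ ω ∈ (CDVF.simpleFibre_finite hq' v).toFinset,
        ∫ u, f (ω, -(Polynomial.eval ω (Polynomial.derivative (q.map E.res))) * u) ∂μ := by
    funext v
    exact finsum_mem_eq_finite_toFinset_sum _ (CDVF.simpleFibre_finite hq' v)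
  rw [hsum]
  -- on `t ^ R O` the section is a finite sum of lifts; elsewhere it vanishes
  have hsections : ∀ y : E.Fc, (fun x => E.PhiNS f (-(m : ℤ)) q x y) ∈ E.LF μ ∧
      I (fun x => E.PhiNS f (-(m : ℤ)) q x y) =
        E.liftAt (fun v => ∑ ω ∈ (CDVF.simpleFibre_finite hq' v).toFinset,
          ∫ u, f (ω, -(Polynomial.eval ω (Polynomial.derivative (q.map E.res))) * u) ∂μ)
          0 (-(m : ℤ)) y * RatFunc.X ^ (-(-(m : ℤ))) := by
    intro y
    by_cases hy : E.t ^ m * y ∈ E.O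
    · obtain ⟨Y, rfl⟩ : ∃ Y : E.O, y = E.t ^ (-(m : ℤ)) * Y := by
        refine ⟨⟨_, hy⟩, ?_⟩
        have := pow_ne_zero m E.t_ne_zero
        rw [zpow_neg, zpow_natCast]
        field_simp
      obtain ⟨a, ha⟩ := E.PhiNS_section f m hm q hq' Y
      have hfun : (fun x => E.PhiNS f (-(m : ℤ)) q x (E.t ^ (-(m : ℤ)) * Y)) =
          ∑ ω ∈ (CDVF.simpleFibre_finite hq' (E.res Y)).toFinset, E.liftAt (fun u =>
            f (ω, -(Polynomial.eval ω (Polynomial.derivative (q.map E.res))) * u))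
            (a ω) (m : ℤ) := by
        funext x
        rw [ha, Finset.sum_apply]
      have hlift : ∀ g : K → ℂ, E.liftAt g 0 (-(m : ℤ)) (E.t ^ (-(m : ℤ)) * Y) =
          algebraMap ℂ CX (g (E.res Y)) := fun g => by
        unfold CDVF.liftAt
        rw [sub_zero, ← mul_assoc, ← zpow_add₀ E.t_ne_zero, neg_add_cancel, zpow_zero, one_mul,
          CDVF.lift0_coe]
      rw [hfun]
      refine ⟨Submodule.sum_mem _ fun ω hω => E.liftAt_mem_LF (hsec ω _ hω) _ _, ?_⟩
      rw [map_sum, Finset.sum_congr rfl fun ω hω => hI.liftAt (hsec ω _ hω) (a ω) m,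
        hlift, map_sum, Finset.sum_mul, neg_neg]
      exact Finset.sum_congr rfl fun ω _ => mul_comm _ _
    · have hfun : (fun x => E.PhiNS f (-(m : ℤ)) q x y) = 0 :=
        funext fun x => E.PhiNS_eq_zero f m q y hy x
      rw [hfun]
      refine ⟨Submodule.zero_mem _, ?_⟩
      unfold CDVF.liftAt CDVF.lift0
      rw [map_zero, if_neg, zero_mul]
      rwa [neg_neg, zpow_natCast, sub_zero]
  have hfun := funext fun y => (hsections y).2
  have hsmul : ∀ g : E.Fc → CX, (fun y => g y * (RatFunc.X ^ (-(-(m : ℤ))) : CX)) =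
      (RatFunc.X ^ (-(-(m : ℤ))) : CX) • g := fun g => by
    funext y
    rw [Pi.smul_apply, smul_eq_mul, mul_comm]
  refine ⟨fun y => (hsections y).1, hfun, ?_, ?_⟩
  · rw [hfun, hsmul]
    exact Submodule.smul_mem _ _ (E.liftAt_mem_LF hGint _ _)
  · rw [hfun, hsmul, map_smul, hI.liftAt hGint, hGI, smul_eq_mul, ← mul_assoc,
      ← zpow_add₀ RatFunc.X_ne_zero, neg_add_cancel, zpow_zero, one_mul]
end
end

section
/- Assume q̄′ is not the zero polynomial in K[X]. Then Φ is Fubini on F×F if and only if the following hold: for each y ∈ F the function x ↦ Φ_sing(x,y) lies in L(F); the function y ↦ ∫^F Φ_sing(x,y) dx lies in L(F); and ∫^F∫^F Φ_sing(x,y) dx dy = 0. -/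
/-!
`Φ = Φ_ns + Φ_sing`, so by linearity of `L(F)` and of the integral the equivalence follows from two
facts, where `A(u) = ∫ f(u, v) dv`.

* Integrating `Φ` first in `y`, translation invariance removes the polynomial: the inner integral
  is the lift of `A`, and the repeated integral is `∫ A` (`phi_inner`).
* Integrating `Φ_ns` first in `x`, all sections and the inner integral are integrable, and the
  repeated integral is again `∫ A` (`phiNS_fubini`).

Hence the two repeated integrals of `Φ` agree exactly when that of `Φ_sing` vanishes.

For the second fact put `m = -R > 0`. The section at `y` vanishes unless `t ^ m y ∈ O`, and then it
is supported on residues `u` with `q̄(u)` equal to the residue of `t ^ m y` and `q̄′(u) ≠ 0`. Each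
such `u` lifts by Hensel's lemma to a solution `b` of `q(b) = t ^ m y` modulo `t ^ (m + 1)`, which is
all the precision needed, and near `b` the section is the lift of `v ↦ f(u, -q̄′(u) v)` at `b, m`
(`phiNS_section`). Its integral is `X ^ m A(u) / ‖q̄′(u)‖`. Summing over `u` gives the density of the
pushforward of `A du` along `q̄`, so the claim reduces to the change of variables formula for the
polynomial `q̄` on `K` (`push_integral`), whose critical points are finite in number.

The axioms of the integral force the norm of `K` to be the Haar modulus (`integral_mul_left`). If the
norm is archimedean, a locally constant function of compact support is zero (`eq_zero_of_one_lt`).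
Otherwise `K` is ultrametric, and `{q̄′ ≠ 0}` is a countable disjoint union of balls which `q̄` maps
bijectively onto balls with radius scaled by the constant `‖q̄′‖`.
-/

noncomputable section

open MeasureTheory Polynomial
open scoped Classical

/-! ### Locally constant functions and series of integrals -/

namespace FubiniPoly

/-- A locally constant function of compact support is uniformly locally constant: it is uniformly
continuous for the discrete uniformity on the target. -/
theorem exists_uniform {V α : Type*} [SeminormedAddCommGroup V] [Zero α] {f : V → α}
    (h1 : IsLocallyConstant f) (h2 : HasCompactSupport f) :
    ∃ δ > 0, ∀ x h : V, ‖h‖ < δ → f (x + h) = f x := by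
  let _ : UniformSpace α := ⊥
  have hu : UniformContinuous f := h2.uniformContinuous_of_continuous h1.continuous
  have hd : {p : V × V | f p.1 = f p.2} ∈ uniformity V := by
    have : SetRel.id ∈ uniformity α := by
      change SetRel.id ∈ Filter.principal _
      simp
    exact hu this
  obtain ⟨δ, hδ, h⟩ := Metric.mem_uniformity_dist.1 hd
  refine ⟨δ, hδ, fun x k hk => ?_⟩
  exact h (a := x + k) (b := x) (by simpa using hk)

/-- If the norm of `K` is archimedean, the only locally constant function of compact support on
`K × K` is `0`: any `v` equals `n ^ k` steps of size `n⁻ᵏ v`, and for large `k` no such step changes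
the value of the function, so that the function is constant. -/
theorem eq_zero_of_one_lt {K : Type} [NontriviallyNormedField K] {f : K × K → ℂ}
    (hf : IsSB f) {n : ℕ} (hn : 1 < ‖(n : K)‖) : f = 0 := by
  obtain ⟨δ, hδ, h⟩ := exists_uniform hf.1 hf.2
  have hmul : ∀ (j : ℕ) (x v : K × K), ‖v‖ < δ → f (x + j • v) = f x := by
    intro j x v hv
    induction j with
    | zero => simp
    | succ j ih => rw [succ_nsmul, ← add_assoc, h _ _ hv, ih]
  have hn0 : (n : K) ≠ 0 := by
    rintro h0; rw [h0, norm_zero] at hn; linarith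
  have hconst : ∀ v, f v = f 0 := by
    intro v
    have hlim : Filter.Tendsto (fun k : ℕ => ‖((n : K)⁻¹ ^ k) • v‖) Filter.atTop (nhds 0) := by
      have : Filter.Tendsto (fun k : ℕ => ‖(n : K)⁻¹‖ ^ k * ‖v‖) Filter.atTop
          (nhds (0 * ‖v‖)) :=
        (tendsto_pow_atTop_nhds_zero_of_lt_one (norm_nonneg _)
          (by rw [norm_inv]; exact inv_lt_one_of_one_lt₀ hn)).mul_const _
      simpa [norm_smul] using this
    obtain ⟨k, hk⟩ := (hlim.eventually (gt_mem_nhds hδ)).exists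
    have := hmul (n ^ k) 0 _ hk
    have e : (n ^ k) • (((n : K)⁻¹ ^ k) • v) = v := by
      rw [← Nat.cast_smul_eq_nsmul K, smul_smul, Nat.cast_pow, ← mul_pow, mul_inv_cancel₀ hn0,
        one_pow, one_smul]
    rwa [e, zero_add] at this
  have : NoncompactSpace K := NormedField.noncompactSpace K
  by_contra hne
  have h0 : f 0 ≠ 0 := by
    intro h0; exact hne (funext fun v => by rw [hconst v, h0]; rfl)
  have hs : tsupport f = Set.univ := by
    rw [Set.eq_univ_iff_forall]
    exact fun v => subset_tsupport f (by rw [Function.mem_support, hconst v]; exact h0)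
  have hc := hf.2
  rw [HasCompactSupport, hs] at hc
  have := hc.image continuous_fst
  rw [Set.image_univ_of_surjective Prod.fst_surjective] at this
  exact noncompact_univ K this

/-- Termwise integration of an absolutely convergent series, including the integrability of its
pointwise sum. -/
theorem hasSum_integrable {α ι : Type*} [MeasurableSpace α] {μ : Measure α} [Countable ι]
    {h : ι → α → ℂ} {H : α → ℂ} (hi : ∀ i, Integrable (h i) μ)
    (hs : Summable fun i => ∫ a, ‖h i a‖ ∂μ) (hH : ∀ a, HasSum (fun i => h i a) (H a)) :
    Integrable H μ ∧ HasSum (fun i => ∫ a, h i a ∂μ) (∫ a, H a ∂μ) := by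
  have e : (fun a => ∑' i, h i a) = H := funext fun a => (hH a).tsum_eq
  refine ⟨⟨?_, ?_⟩, by simpa only [congrFun e] using hasSum_integral_of_summable_integral_norm hi hs⟩
  · refine aestronglyMeasurable_of_tendsto_ae (Filter.atTop : Filter (Finset ι))
      (f := fun s a => ∑ i ∈ s, h i a) ?_ (Filter.Eventually.of_forall hH)
    intro s
    exact (integrable_finsetSum s fun i _ => hi i).1
  · have hle : ∀ a, ‖H a‖ₑ ≤ ∑' i, ‖h i a‖ₑ := by
      intro a
      refine le_of_tendsto ((continuous_enorm.tendsto _).comp (hH a))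
        (Filter.Eventually.of_forall fun s => ?_)
      exact (enorm_sum_le _ _).trans (ENNReal.sum_le_tsum s)
    refine lt_of_le_of_lt (lintegral_mono hle) ?_
    rw [lintegral_tsum fun i => (hi i).1.enorm]
    simp_rw [← fun i => ofReal_integral_norm_eq_lintegral_enorm (hi i)]
    exact hs.tsum_ofReal_lt_top

/-! ### Polynomial change of variables on an ultrametric local field -/

/-- If every point of `S` has a ball satisfying `P`, and sets satisfying `P` lie in `S`, then `S` is
a countable disjoint union of balls satisfying `P`. For each `u` take the largest ball of radius
`(1/2) ^ n` about `u` that satisfies `P`; any point of an ultrametric ball is a centre of it, so two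
such maximal balls are equal or disjoint. -/
theorem exists_partition {X : Type*} [PseudoMetricSpace X] [IsUltrametricDist X]
    [TopologicalSpace.SeparableSpace X] (P : Set X → Prop) (S : Set X)
    (hP : ∀ u ∈ S, ∃ n : ℕ, P (Metric.ball u ((1 / 2) ^ n)))
    (hS : ∀ B, P B → B ⊆ S) :
    ∃ 𝓑 : Set (Set X), 𝓑.Countable ∧ 𝓑.PairwiseDisjoint id ∧ (∀ B ∈ 𝓑, P B) ∧
      ⋃₀ 𝓑 = S := by
  have hmin : ∀ u ∈ S, ∃ n : ℕ, P (Metric.ball u ((1 / 2) ^ n)) ∧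
      ∀ m < n, ¬ P (Metric.ball u ((1 / 2) ^ m)) := fun u hu =>
    ⟨Nat.find (hP u hu), Nat.find_spec (hP u hu), fun m hm => Nat.find_min (hP u hu) hm⟩
  choose! N hN hN' using hmin
  have hpos : ∀ n : ℕ, (0 : ℝ) < (1 / 2) ^ n := fun n => by positivity
  have hle : ∀ u ∈ S, ∀ v ∈ Metric.ball u ((1 / 2 : ℝ) ^ N u), N v ≤ N u := by
    intro u hu v hv
    by_contra! hlt
    have hvS : v ∈ S := hS _ (hN u hu) hv
    apply hN' v hvS _ hlt
    rw [← IsUltrametricDist.ball_eq_of_mem hv]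
    exact hN u hu
  have heq : ∀ u ∈ S, ∀ v ∈ Metric.ball u ((1 / 2 : ℝ) ^ N u),
      Metric.ball u ((1 / 2 : ℝ) ^ N u) = Metric.ball v ((1 / 2 : ℝ) ^ N v) := by
    intro u hu v hv
    have hvS : v ∈ S := hS _ (hN u hu) hv
    have h1 := hle u hu v hv
    have h2 : u ∈ Metric.ball v ((1 / 2 : ℝ) ^ N v) := by
      rw [Metric.mem_ball, dist_comm]
      exact (Metric.mem_ball.1 hv).trans_le
        (pow_le_pow_of_le_one (by norm_num) (by norm_num) h1)
    have h3 := hle v hvS u h2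
    rw [le_antisymm h1 h3]
    exact IsUltrametricDist.ball_eq_of_mem hv
  set 𝓑 : Set (Set X) := (fun u => Metric.ball u ((1 / 2 : ℝ) ^ N u)) '' S
  have hdisj : 𝓑.PairwiseDisjoint id := by
    rintro _ ⟨u, hu, rfl⟩ _ ⟨v, hv, rfl⟩ hne
    rw [Function.onFun, id, id, Set.disjoint_left]
    intro w hw hw'
    exact hne ((heq u hu w hw).trans (heq v hv w hw').symm)
  refine ⟨𝓑, hdisj.countable_of_isOpen ?_ ?_, hdisj, ?_, ?_⟩
  · rintro _ ⟨u, hu, rfl⟩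
    exact Metric.isOpen_ball
  · rintro _ ⟨u, hu, rfl⟩
    exact ⟨u, Metric.mem_ball_self (hpos _)⟩
  · rintro _ ⟨u, hu, rfl⟩
    exact hN u hu
  · apply Set.Subset.antisymm
    · rintro v ⟨_, ⟨u, hu, rfl⟩, hv⟩
      exact hS _ (hN u hu) hv
    · exact fun u hu => ⟨_, ⟨u, hu, rfl⟩, Metric.mem_ball_self (hpos _)⟩

variable {K : Type} [NontriviallyNormedField K]

/-- On a ball where `g` differs from multiplication by `a` by a map of Lipschitz constant at most
`‖a‖ / 2`, `g` is a bijection onto the ball about `g u` with radius scaled by `‖a‖`. Surjectivity is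
Banach's fixed point theorem for `x ↦ x - (g x - w) / a`. -/
theorem bijOn_ball [CompleteSpace K] [IsUltrametricDist K] {g : K → K} {a u : K} {ε : ℝ}
    (hε : 0 < ε) (ha : a ≠ 0)
    (h : ∀ x ∈ Metric.ball u ε, ∀ y ∈ Metric.ball u ε,
      ‖g x - g y - a * (x - y)‖ ≤ 1 / 2 * (‖a‖ * ‖x - y‖)) :
    Set.BijOn g (Metric.ball u ε) (Metric.ball (g u) (‖a‖ * ε)) := by
  have hapos : 0 < ‖a‖ := norm_pos_iff.2 ha
  have hu : u ∈ Metric.ball u ε := Metric.mem_ball_self hε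
  refine ⟨?_, ?_, ?_⟩
  · intro x hx
    have h1 := h x hx u hu
    rw [mem_ball_iff_norm] at hx ⊢
    have e : g x - g u = (g x - g u - a * (x - u)) + a * (x - u) := by ring
    rw [e]
    refine (IsUltrametricDist.norm_add_le_max _ _).trans_lt (max_lt ?_ ?_)
    · nlinarith [norm_nonneg (x - u)]
    · rw [norm_mul]; gcongr
  · intro x hx y hy hxy
    have h1 := h x hx y hy
    rw [hxy, sub_self, zero_sub, norm_neg, norm_mul] at h1
    have h2 : ‖x - y‖ ≤ 0 := by
      by_contra! h3
      nlinarith [mul_pos hapos h3]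
    exact sub_eq_zero.1 (norm_le_zero_iff.1 h2)
  · intro w hw
    rw [mem_ball_iff_norm] at hw
    set T : K → K := fun x => x - (g x - w) / a with hT
    have hTd : ∀ x ∈ Metric.ball u ε, ∀ y ∈ Metric.ball u ε,
        ‖T x - T y‖ ≤ 1 / 2 * ‖x - y‖ := by
      intro x hx y hy
      have e : T x - T y = -((g x - g y - a * (x - y)) / a) := by
        simp only [hT]; field_simp; ring
      rw [e, norm_neg, norm_div, div_le_iff₀ hapos]
      linarith [h x hx y hy]
    have hmaps : Set.MapsTo T (Metric.ball u ε) (Metric.ball u ε) := by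
      intro x hx
      have h1 := hTd x hx u hu
      rw [mem_ball_iff_norm] at hx ⊢
      have e : T x - u = (T x - T u) + (w - g u) / a := by
        simp only [hT]; field_simp; ring
      rw [e]
      refine (IsUltrametricDist.norm_add_le_max _ _).trans_lt (max_lt ?_ ?_)
      · linarith [norm_nonneg (x - u)]
      · rw [norm_div, div_lt_iff₀ hapos]; linarith
    have hc : ContractingWith (1 / 2) (hmaps.restrict T _ _) := by
      refine ⟨by norm_num, LipschitzWith.of_dist_le_mul fun x y => ?_⟩
      rw [Subtype.dist_eq, Subtype.dist_eq, dist_eq_norm, dist_eq_norm]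
      simpa using hTd x x.2 y y.2
    obtain ⟨x, hx, hfix, -⟩ := ContractingWith.exists_fixedPoint'
      (IsUltrametricDist.isClosed_ball u ε).isComplete hmaps hc hu (edist_ne_top _ _)
    refine ⟨x, hx, ?_⟩
    have : (g x - w) / a = 0 := by
      have h2 : x - (g x - w) / a = x := hfix
      linear_combination -h2
    rw [div_eq_zero_iff, or_iff_left ha] at this
    exact sub_eq_zero.1 this

variable [MeasurableSpace K] (μ : Measure K)

/-- `B` is a set on which `p` is injective, `‖p′‖` is a positive constant `c`, `F` is constant, and
whose image under `p` has measure `c` times that of `B`. -/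
def Good (p : K[X]) (F : K → ℂ) (B : Set K) : Prop :=
  ∃ (c : ℝ) (F₀ : ℂ), 0 < c ∧
    (∀ v ∈ B, eval v (derivative p) ≠ 0 ∧ ‖eval v (derivative p)‖ = c ∧ F v = F₀) ∧
    Set.InjOn (fun x => eval x p) B ∧ MeasurableSet B ∧ μ B ≠ ⊤ ∧
    MeasurableSet ((fun x => eval x p) '' B) ∧
    μ ((fun x => eval x p) '' B) = ENNReal.ofReal c * μ B

/-- The scaling of the integral by `‖a‖⁻¹` under `u ↦ a * u`, applied to indicators of balls. -/
theorem measure_ball_mul [BorelSpace K] [ProperSpace K] [IsUltrametricDist K]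
    [μ.IsAddHaarMeasure]
    (hmod : ∀ (a : K), a ≠ 0 → ∀ f : K → ℂ, Integrable f μ → Integrable (fun u => f (a * u)) μ →
      ∫ u, f (a * u) ∂μ = (‖a‖⁻¹ : ℝ) * ∫ u, f u ∂μ) {a : K} (ha : a ≠ 0) (u v : K) (ε : ℝ) :
    μ (Metric.ball v (‖a‖ * ε)) = ENNReal.ofReal ‖a‖ * μ (Metric.ball u ε) := by
  have hapos : 0 < ‖a‖ := norm_pos_iff.2 ha
  have htr : ∀ (w : K) (r : ℝ), μ (Metric.ball w r) = μ (Metric.ball 0 r) := fun w r =>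
    Measure.addHaar_ball_center μ w r
  rw [htr u, htr v]
  have e : (fun x => (Metric.ball (0 : K) (‖a‖ * ε)).indicator (1 : K → ℂ) (a * x)) =
      (Metric.ball (0 : K) ε).indicator 1 := by
    funext x
    simp only [Set.indicator_apply, mem_ball_zero_iff, norm_mul, mul_lt_mul_iff_right₀ hapos]
    rfl
  have hi : ∀ r : ℝ, Integrable ((Metric.ball (0 : K) r).indicator (1 : K → ℂ)) μ := fun r =>
    (integrable_indicator_iff measurableSet_ball).2
      (integrableOn_const measure_ball_lt_top.ne)
  have h := hmod a ha _ (hi (‖a‖ * ε)) (by rw [e]; exact hi ε)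
  have hone : ∀ r : ℝ, ∫ x, (Metric.ball (0 : K) r).indicator (1 : K → ℂ) x ∂μ =
      μ.real (Metric.ball (0 : K) r) := by
    intro r
    rw [integral_indicator measurableSet_ball]
    simp
  rw [e, hone, hone] at h
  have hreal : μ.real (Metric.ball 0 (‖a‖ * ε)) = ‖a‖ * μ.real (Metric.ball 0 ε) := by
    have h2 : (μ.real (Metric.ball 0 ε) : ℂ) =
      ((‖a‖⁻¹ * μ.real (Metric.ball 0 (‖a‖ * ε)) : ℝ) : ℂ) := by
        simpa using h
    rw [Complex.ofReal_inj.1 h2, mul_inv_cancel_left₀ hapos.ne']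
  rw [← ENNReal.ofReal_toReal (measure_ball_lt_top (μ := μ) (x := (0 : K)) (r := ‖a‖ * ε)).ne,
    ← ENNReal.ofReal_toReal (measure_ball_lt_top (μ := μ) (x := (0 : K)) (r := ε)).ne,
    ← ENNReal.ofReal_mul hapos.le]
  exact congrArg _ hreal

/-- Every point where `p′` does not vanish has a good ball: `p` is strictly differentiable there. -/
theorem exists_good [BorelSpace K] [ProperSpace K] [IsUltrametricDist K]
    [μ.IsAddHaarMeasure]
    (hmod : ∀ (a : K), a ≠ 0 → ∀ f : K → ℂ, Integrable f μ → Integrable (fun u => f (a * u)) μ →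
      ∫ u, f (a * u) ∂μ = (‖a‖⁻¹ : ℝ) * ∫ u, f u ∂μ) (p : K[X]) (F : K → ℂ)
    (hF : IsLocallyConstant F) {u : K} (hu : eval u (derivative p) ≠ 0) :
    ∃ n : ℕ, Good μ p F (Metric.ball u ((1 / 2) ^ n)) := by
  set a := eval u (derivative p)
  have hapos : 0 < ‖a‖ := norm_pos_iff.2 hu
  have h1 : ∀ᶠ v in nhds u, F v = F u := hF.eventually_eq u
  have h2 : ∀ᶠ v in nhds u, ‖eval v (derivative p) - a‖ < ‖a‖ := by
    have : ContinuousAt (fun v => ‖eval v (derivative p) - a‖) u := by fun_prop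
    exact this.eventually_lt_const (by simpa [a] using hapos)
  have h3 : ∀ᶠ z in nhds (u, u), ‖eval z.1 p - eval z.2 p - a * (z.1 - z.2)‖ ≤
      1 / 2 * (‖a‖ * ‖z.1 - z.2‖) := by
    have := (p.hasStrictDerivAt u).isLittleO.bound (c := 1 / 2 * ‖a‖) (by positivity)
    filter_upwards [this] with z hz
    simpa [mul_comm, mul_assoc, mul_left_comm] using hz
  obtain ⟨ε₁, hε₁, hb₁⟩ := Metric.eventually_nhds_iff_ball.1 (h1.and h2)
  obtain ⟨ε₂, hε₂, hb₂⟩ := Metric.eventually_nhds_iff_ball.1 h3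
  obtain ⟨n, hn⟩ := exists_pow_lt_of_lt_one (lt_min hε₁ hε₂) (by norm_num : (1 / 2 : ℝ) < 1)
  have hpos : (0 : ℝ) < (1 / 2) ^ n := by positivity
  have hs₁ : Metric.ball u ((1 / 2 : ℝ) ^ n) ⊆ Metric.ball u ε₁ :=
    Metric.ball_subset_ball (hn.le.trans (min_le_left _ _))
  have hs₂ : Metric.ball u ((1 / 2 : ℝ) ^ n) ⊆ Metric.ball u ε₂ :=
    Metric.ball_subset_ball (hn.le.trans (min_le_right _ _))
  have hbij := bijOn_ball (g := fun x => eval x p) hpos hu fun x hx y hy =>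
    hb₂ (x, y) (by
      rw [← ball_prod_same]
      exact ⟨hs₂ hx, hs₂ hy⟩)
  refine ⟨n, ‖a‖, F u, hapos, fun v hv => ?_, hbij.injOn, measurableSet_ball,
    measure_ball_lt_top.ne, ?_, ?_⟩
  · obtain ⟨h4, h5⟩ := hb₁ v (hs₁ hv)
    have h6 : ‖eval v (derivative p)‖ = ‖a‖ := by
      have := IsUltrametricDist.norm_eq_of_add_norm_lt_max (x := eval v (derivative p)) (y := -a)
        (by rw [← sub_eq_add_neg, norm_neg]; exact h5.trans_le (le_max_right _ _))
      rwa [norm_neg] at this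
    exact ⟨norm_pos_iff.1 (h6 ▸ hapos), h6, h4⟩
  · rw [hbij.image_eq]; exact measurableSet_ball
  · rw [hbij.image_eq]
    exact measure_ball_mul μ hmod hu _ _ _

/-- The finite set of points of the fibre `p⁻¹(w)` at which `p′` does not vanish. -/
def fib (p : K[X]) (w : K) : Finset K :=
  (p - C w).roots.toFinset.filter fun u => eval u (derivative p) ≠ 0

omit [MeasurableSpace K] in
theorem mem_fib {p : K[X]} {w u : K} :
    u ∈ fib p w ↔ eval u p = w ∧ eval u (derivative p) ≠ 0 := by
  rw [fib, Finset.mem_filter, Multiset.mem_toFinset, and_congr_left_iff]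
  intro h
  have : p - C w ≠ 0 := by
    intro h0
    rw [sub_eq_zero.1 h0] at h
    simp at h
  rw [mem_roots this, IsRoot, eval_sub, eval_C, sub_eq_zero]

/-- The density of the pushforward of `F du` along the unramified part of `p`, that is
`w ↦ ∑ F(u) / ‖p′(u)‖`, summed over the `u` with `p(u) = w` and `p′(u) ≠ 0`. -/
def push (p : K[X]) (F : K → ℂ) (w : K) : ℂ :=
  ∑ u ∈ fib p w, ((‖eval u (derivative p)‖⁻¹ : ℝ) : ℂ) * F u

/-- Change of variables for a polynomial over an ultrametric local field. Both integrals are the sum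
over a partition of `{p′ ≠ 0}` into good balls `B` of the integrals of `F` over `B`; the critical set
is finite, hence null. -/
theorem push_integral [BorelSpace K] [ProperSpace K] [IsUltrametricDist K]
    [μ.IsAddHaarMeasure]
    (hmod : ∀ (a : K), a ≠ 0 → ∀ f : K → ℂ, Integrable f μ → Integrable (fun u => f (a * u)) μ →
      ∫ u, f (a * u) ∂μ = (‖a‖⁻¹ : ℝ) * ∫ u, f u ∂μ) (p : K[X]) (hp : derivative p ≠ 0)
    (F : K → ℂ) (hF : IsLocallyConstant F) (hFi : Integrable F μ) :
    Integrable (push p F) μ ∧ ∫ w, push p F w ∂μ = ∫ u, F u ∂μ := by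
  obtain ⟨𝓑, hcount, hdisj, hgood, hcover⟩ := exists_partition (Good μ p F)
    {u | eval u (derivative p) ≠ 0} (fun u hu => exists_good μ hmod p F hF hu)
    (fun B ⟨c, F₀, _, h, _⟩ v hv => (h v hv).1)
  have : Countable 𝓑 := hcount
  choose c F₀ hc hval hinj hmeas hfin hpm hpμ using fun B : 𝓑 => hgood B B.2
  set h : 𝓑 → K → ℂ := fun B => ((fun x => eval x p) '' (B : Set K)).indicator
    fun _ => ((c B)⁻¹ : ℝ) * F₀ B with hh
  have hcr : ∀ B : 𝓑, μ.real ((fun x => eval x p) '' (B : Set K)) = c B * μ.real (B : Set K) := by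
    intro B
    rw [Measure.real, hpμ, ENNReal.toReal_mul, ENNReal.toReal_ofReal (hc B).le]; rfl
  have hpfin : ∀ B : 𝓑, μ ((fun x => eval x p) '' (B : Set K)) ≠ ⊤ := fun B => by
    rw [hpμ]; exact ENNReal.mul_ne_top ENNReal.ofReal_ne_top (hfin B)
  have hint : ∀ B, Integrable (h B) μ := fun B =>
    (integrable_indicator_iff (hpm B)).2 (integrableOn_const (hpfin B))
  have hF1 : ∀ B : 𝓑, ∫ u in (B : Set K), F u ∂μ = μ.real (B : Set K) * F₀ B := by
    intro B
    rw [setIntegral_congr_fun (hmeas B) (fun v hv => (hval B v hv).2.2), setIntegral_const]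
    simp
  have hF2 : ∀ B : 𝓑, ∫ u in (B : Set K), ‖F u‖ ∂μ = μ.real (B : Set K) * ‖F₀ B‖ := by
    intro B
    rw [setIntegral_congr_fun (g := fun _ => ‖F₀ B‖) (hmeas B)
      (fun v hv => congrArg _ (hval B v hv).2.2), setIntegral_const]
    simp
  have hI1 : ∀ B, ∫ w, h B w ∂μ = ∫ u in (B : Set K), F u ∂μ := by
    intro B
    rw [hF1, integral_indicator (hpm B), setIntegral_const, hcr]
    have : (c B : ℂ) ≠ 0 := Complex.ofReal_ne_zero.2 (hc B).ne'
    simp only [Complex.real_smul]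
    push_cast
    field_simp
  have hI2 : ∀ B, ∫ w, ‖h B w‖ ∂μ = ∫ u in (B : Set K), ‖F u‖ ∂μ := by
    intro B
    simp only [hh, norm_indicator_eq_indicator_norm]
    rw [hF2, integral_indicator (hpm B), setIntegral_const, hcr]
    have := (hc B).ne'
    simp only [norm_mul, Complex.norm_real, norm_inv, Real.norm_eq_abs, abs_of_pos (hc B),
      smul_eq_mul]
    field_simp
  have hd' : Pairwise (Function.onFun Disjoint fun B : 𝓑 => (B : Set K)) :=
    fun B B' hne => hdisj B.2 B'.2 (fun e => hne (Subtype.ext e))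
  have hsumn : Summable fun B => ∫ w, ‖h B w‖ ∂μ := by
    simp_rw [hI2]
    exact (hasSum_integral_iUnion hmeas hd' hFi.norm.integrableOn).summable
  have hpt : ∀ w, HasSum (fun B => h B w) (push p F w) := by
    intro w
    have e : ∀ B : 𝓑, h B w = ∑ u ∈ fib p w, (B : Set K).indicator
        (fun u => ((‖eval u (derivative p)‖⁻¹ : ℝ) : ℂ) * F u) u := by
      intro B
      by_cases hw : w ∈ (fun x => eval x p) '' (B : Set K)
      · obtain ⟨u, huB, rfl⟩ := hw
        have hu : u ∈ fib p (eval u p) := mem_fib.2 ⟨rfl, (hval B u huB).1⟩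
        rw [Finset.sum_eq_single_of_mem u hu]
        · rw [Set.indicator_of_mem huB, (hval B u huB).2.1, (hval B u huB).2.2]
          exact Set.indicator_of_mem (Set.mem_image_of_mem _ huB) _
        · intro v hv hne
          exact Set.indicator_of_notMem
            (fun hvB => hne (hinj B hvB huB (mem_fib.1 hv).1)) _
      · rw [Finset.sum_eq_zero]
        · exact Set.indicator_of_notMem hw _
        · intro u hu
          exact Set.indicator_of_notMem
            (fun huB => hw ⟨u, huB, (mem_fib.1 hu).1⟩) _
    simp_rw [e]
    refine hasSum_sum fun u hu => ?_
    have hu' : u ∈ ⋃₀ 𝓑 := by rw [hcover]; exact (mem_fib.1 hu).2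
    obtain ⟨B, hB, huB⟩ := hu'
    have := hasSum_single (f := fun B : 𝓑 => (B : Set K).indicator
        (fun u => ((‖eval u (derivative p)‖⁻¹ : ℝ) : ℂ) * F u) u) ⟨B, hB⟩ (by
      intro B' hne
      exact Set.indicator_of_notMem (fun huB' => Set.disjoint_left.1 (hd' hne) huB' huB) _)
    rwa [Set.indicator_of_mem huB] at this
  obtain ⟨hHi, hHs⟩ := hasSum_integrable hint hsumn hpt
  refine ⟨hHi, hHs.unique ?_⟩
  simp_rw [hI1]
  have := hasSum_integral_iUnion hmeas hd' hFi.integrableOn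
  rwa [← Set.sUnion_eq_iUnion, hcover, setIntegral_eq_integral_of_ae_compl_eq_zero] at this
  have hz : μ {u | eval u (derivative p) ≠ 0}ᶜ = 0 := by
    refine Set.Finite.measure_zero ?_ μ
    refine (derivative p).roots.toFinset.finite_toSet.subset fun u hu => ?_
    simpa [hp] using hu
  filter_upwards [measure_eq_zero_iff_ae_notMem.1 hz] with u hu hu'
  exact absurd hu' hu

/-! ### The ring of integers and Hensel's lemma -/

section Algebra

variable {K : Type} [Field K] (E : CDVF K)

theorem t_ne_zero : E.t ≠ 0 := by
  intro h
  exact E.hirr.ne_zero (Subtype.ext h)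

/-- The prime element `t`, as an element of the ring of integers. -/
def tO : E.O := ⟨E.t, E.ht⟩

theorem res_t : E.res (tO E) = 0 := (E.hres_ker _).2 dvd_rfl

theorem tpow_mem (n : ℕ) : E.t ^ n ∈ E.O := pow_mem E.ht n

theorem tpow_zpow_mem {n : ℤ} (h : 0 ≤ n) : E.t ^ n ∈ E.O := by
  lift n to ℕ using h
  rw [zpow_natCast]; exact tpow_mem E n

theorem inv_mem_of_isUnit {u : E.O} (h : IsUnit u) : (u : E.Fc)⁻¹ ∈ E.O := by
  obtain ⟨v, rfl⟩ := h
  have : (v : E.O) * ((v⁻¹ : E.Oˣ) : E.O) = 1 := v.mul_inv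
  have h2 : ((v : E.O) : E.Fc) * (((v⁻¹ : E.Oˣ) : E.O) : E.Fc) = 1 := by
    exact_mod_cast congrArg Subtype.val this
  rw [inv_eq_of_mul_eq_one_right h2]
  exact Subtype.property _

theorem t_inv_notMem : E.t⁻¹ ∉ E.O := by
  intro h
  apply E.hirr.not_isUnit
  refine IsUnit.of_mul_eq_one ⟨_, h⟩ (Subtype.ext ?_)
  exact mul_inv_cancel₀ (t_ne_zero E)

theorem zpow_mem_iff {n : ℤ} : E.t ^ n ∈ E.O ↔ 0 ≤ n := by
  refine ⟨fun h => ?_, tpow_zpow_mem E⟩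
  by_contra! hn
  apply t_inv_notMem E
  have e : E.t⁻¹ = E.t ^ n * E.t ^ (-1 - n) := by
    rw [← zpow_add₀ (t_ne_zero E)]; simp
  rw [e]
  exact mul_mem h (tpow_zpow_mem E (by omega))

theorem nu_eq_of_unit {x : E.Fc} (hx : x ∈ E.O) (hx' : x⁻¹ ∈ E.O) (h0 : x ≠ 0) : E.ν x = 0 := by
  obtain ⟨u, hu, e⟩ := E.hν x h0
  have hui := inv_mem_of_isUnit E hu
  have hu0 : (u : E.Fc) ≠ 0 := by
    intro h; rw [h, zero_mul] at e; exact h0 e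
  have h1 : E.t ^ E.ν x ∈ E.O := by
    have : E.t ^ E.ν x = (u : E.Fc)⁻¹ * x := by
      conv_rhs => rw [e]
      rw [inv_mul_cancel_left₀ hu0]
    rw [this]; exact mul_mem hui hx
  have h2 : E.t ^ (-E.ν x) ∈ E.O := by
    have : E.t ^ (-E.ν x) = (u : E.Fc) * x⁻¹ := by
      conv_rhs => rw [e]
      rw [mul_inv, mul_inv_cancel_left₀ hu0, zpow_neg]
    rw [this]; exact mul_mem u.2 hx'
  rw [zpow_mem_iff] at h1 h2
  omega

/-- The ring of integers is local: elements with non-zero residue are units. -/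
theorem inv_mem_of_res_ne {w : E.O} (h : E.res w ≠ 0) : (w : E.Fc)⁻¹ ∈ E.O := by
  have hw0 : (w : E.Fc) ≠ 0 := by
    intro h0
    apply h
    rw [show w = 0 from Subtype.ext h0, map_zero]
  obtain ⟨u, hu, e⟩ := E.hν w hw0
  have hle : E.ν w ≤ 0 := by
    by_contra! hlt
    apply h
    rw [E.hres_ker]
    refine ⟨u * ⟨E.t ^ (E.ν w - 1), tpow_zpow_mem E (by omega)⟩, Subtype.ext ?_⟩
    refine e.trans ?_
    simp only [Subring.coe_mul]
    rw [zpow_sub_one₀ (t_ne_zero E)]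
    have := t_ne_zero E
    field_simp
  rw [e, mul_inv, ← zpow_neg]
  exact mul_mem (inv_mem_of_isUnit E hu) (tpow_zpow_mem E (by omega))

theorem mul_mem_iff {w : E.O} (h : E.res w ≠ 0) {z : E.Fc} : z * w ∈ E.O ↔ z ∈ E.O := by
  refine ⟨fun hz => ?_, fun hz => mul_mem hz w.2⟩
  have hw0 : (w : E.Fc) ≠ 0 := by
    intro h0
    apply h
    rw [show w = 0 from Subtype.ext h0, map_zero]
  have := mul_mem hz (inv_mem_of_res_ne E h)
  rwa [mul_inv_cancel_right₀ hw0] at this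

theorem resF_coe (x : E.O) : E.resF x = E.res x := by
  rw [CDVF.resF, dif_pos x.2]

theorem resF_of_mem {x : E.Fc} (h : x ∈ E.O) : E.resF x = E.res ⟨x, h⟩ := dif_pos h

theorem eval_coe (q : Polynomial E.O) (x : E.O) :
    eval (x : E.Fc) (q.map E.O.subtype) = (eval x q : E.O) := by
  rw [eval_map]
  exact eval₂_hom E.O.subtype x

theorem res_eval (q : Polynomial E.O) (x : E.O) :
    E.res (eval x q) = eval (E.res x) (q.map E.res) := by
  rw [eval_map]
  exact (eval₂_hom E.res x).symm

/-- Hensel's lemma to finite order: a simple root `u` of `q̄ - ȳ` lifts to a root of `q - y` modulo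
`t ^ (n + 1)`. -/
theorem hensel (q : Polynomial E.O) (y : E.O) {u : K} (hu : eval u (q.map E.res) = E.res y)
    (hu' : eval u (derivative (q.map E.res)) ≠ 0) (n : ℕ) :
    ∃ b e : E.O, E.res b = u ∧ eval b q - y = tO E ^ (n + 1) * e := by
  induction n with
  | zero =>
    obtain ⟨b, hb⟩ := E.hres_surj u
    have : E.res (eval b q - y) = 0 := by
      rw [map_sub, res_eval, hb, hu, sub_self]
    obtain ⟨e, he⟩ := (E.hres_ker _).1 this
    exact ⟨b, e, hb, by rw [zero_add, pow_one]; exact he⟩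
  | succ n ih =>
    obtain ⟨b, e, hb, he⟩ := ih
    obtain ⟨d, hd⟩ := E.hres_surj (-(E.res e) / eval u (derivative (q.map E.res)))
    obtain ⟨k, hk⟩ := q.binomExpansion b (tO E ^ (n + 1) * d)
    have h1 : E.res (e + eval b (derivative q) * d + k * tO E ^ (n + 1) * d ^ 2) = 0 := by
      rw [map_add, map_add, map_mul, map_mul, map_mul, map_pow, res_t, res_eval, hb, hd,
        ← derivative_map]
      field_simp
      ring
    obtain ⟨e', he'⟩ := (E.hres_ker _).1 h1
    refine ⟨b + tO E ^ (n + 1) * d, e', ?_, ?_⟩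
    · rw [map_add, map_mul, map_pow, res_t, hb]; ring
    · rw [hk]
      change _ = tO E * e' at he'
      linear_combination he + tO E ^ (n + 1) * he'

/-- Difference quotients of `q` between points with the same residue `u` reduce to `q̄′(u)`. -/
theorem exists_slope (q : Polynomial E.O) {x b : E.O} {u : K} (hx : E.res x = u)
    (hb : E.res b = u) : ∃ w : E.O, E.res w = eval u (derivative (q.map E.res)) ∧
      eval x q - eval b q = (x - b) * w := by
  obtain ⟨k, hk⟩ := q.binomExpansion b (x - b)
  refine ⟨eval b (derivative q) + k * (x - b), ?_, ?_⟩
  · rw [map_add, map_mul, map_sub, hx, hb, res_eval, hb, derivative_map]; ring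
  · rw [add_sub_cancel] at hk
    rw [hk]; ring

end Algebra

/-! ### Sections of the non-singular part -/

section Section

variable {K : Type} [Field K] (E : CDVF K)

theorem res_eq_of_sub {m : ℕ} (hm : 0 < m) {x b : E.O} {z : E.Fc} (hz : z ∈ E.O)
    (h : (x : E.Fc) - b = E.t ^ m * z) : E.res x = E.res b := by
  obtain ⟨m, rfl⟩ := Nat.exists_eq_succ_of_ne_zero hm.ne'
  rw [← sub_eq_zero, ← map_sub, E.hres_ker]
  refine ⟨tO E ^ m * ⟨z, hz⟩, Subtype.ext ?_⟩
  simp only [AddSubgroupClass.coe_sub, h, Subring.coe_mul, SubmonoidClass.coe_pow, tO]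
  rw [Nat.succ_eq_add_one, pow_succ]
  ring

/-- On the residue class of a non-singular `u`, the section of `Φ` at `y` is the lift of
`v ↦ f(u, -q̄′(u) v)` at `b, m`, where `b` is an approximate solution of `q(b) = t ^ m y` over `u`.
With `x = b + t ^ m z`, one has `y - t ^ (-m) q(x) = -z w` modulo `t O` for some `w` with residue
`q̄′(u)`, so the left side is integral exactly when `z` is. -/
theorem lift_eq (f : K × K → ℂ) (m : ℕ) (q : Polynomial E.O) {x b y' e : E.O} {u : K} {y : E.Fc}
    (hx : E.res x = u) (hb : E.res b = u) (hu' : eval u (derivative (q.map E.res)) ≠ 0)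
    (hy : (y' : E.Fc) = E.t ^ m * y) (he : eval b q - y' = tO E ^ (m + 1) * e) :
    E.lift0₂ f x (y - E.t ^ (-m : ℤ) * eval (x : E.Fc) (q.map E.O.subtype)) =
      E.liftAt (fun v => f (u, -eval u (derivative (q.map E.res)) * v)) b m x := by
  obtain ⟨w, hw, hwe⟩ := exists_slope E q hx hb
  have ht := t_ne_zero E
  set z : E.Fc := E.t ^ (-m : ℤ) * (x - b) with hz
  have key : y - E.t ^ (-m : ℤ) * eval (x : E.Fc) (q.map E.O.subtype) =
      -(z * w) - (tO E * e : E.O) := by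
    have h1 : ((eval x q : E.O) : E.Fc) - (eval b q : E.O) = (x - b) * w := by
      exact_mod_cast congrArg Subtype.val hwe
    have h2 : ((eval b q : E.O) : E.Fc) - y' = E.t ^ (m + 1) * e := by
      have := congrArg Subtype.val he
      simpa [tO] using this
    have h3 : y = E.t ^ (-m : ℤ) * y' := by
      rw [hy, zpow_neg, zpow_natCast, inv_mul_cancel_left₀ (pow_ne_zero _ ht)]
    have h4 : E.t ^ (-m : ℤ) * E.t ^ (m + 1) = E.t := by
      rw [zpow_neg, zpow_natCast, pow_succ, inv_mul_cancel_left₀ (pow_ne_zero _ ht)]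
    rw [eval_coe, h3, hz, Subring.coe_mul]
    change _ = _ - E.t * (e : E.Fc)
    linear_combination (-E.t ^ (-m : ℤ)) * h1 - E.t ^ (-m : ℤ) * h2 - e * h4
  rw [key, CDVF.lift0₂, CDVF.liftAt, CDVF.lift0, ← hz]
  have hw' : E.res w ≠ 0 := by rwa [hw]
  have hiff : -(z * w) - (tO E * e : E.O) ∈ E.O ↔ z ∈ E.O := by
    refine Iff.trans ?_ (mul_mem_iff E hw')
    refine ⟨fun h => ?_, fun h => sub_mem (neg_mem h) (Subtype.property _)⟩
    have := neg_mem (add_mem h (tO E * e).2)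
    simpa using this
  by_cases hzO : z ∈ E.O
  · rw [if_pos ⟨x.2, hiff.2 hzO⟩, if_pos hzO]
    have e2 : E.resF (-(z * w) - (tO E * e : E.O)) =
        -eval u (derivative (q.map E.res)) * E.resF z := by
      have : -(z * w) - (tO E * e : E.O) = ((-(⟨z, hzO⟩ * w) - tO E * e : E.O) : E.Fc) := by
        simp
      rw [this, resF_coe, resF_of_mem E hzO, map_sub, map_neg, map_mul, map_mul, res_t, hw]
      ring
    rw [e2, resF_coe, hx]
  · rw [if_neg (fun h => hzO (hiff.1 h.2)), if_neg hzO]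

end Section

section NS

variable {K : Type} [NontriviallyNormedField K] (E : CDVF K)

theorem phiNS_eq_zero (f : K × K → ℂ) (m : ℕ) (q : Polynomial E.O) {y : E.Fc}
    (hy : E.t ^ m * y ∉ E.O) (x : E.Fc) : E.PhiNS f (-m) q x y = 0 := by
  rw [CDVF.PhiNS, ite_eq_right_iff]
  rintro ⟨hx, -⟩
  rw [CDVF.Phi, CDVF.lift0₂, if_neg]
  rintro ⟨-, h⟩
  apply hy
  have h1 := add_mem (mul_mem (tpow_mem E m) h) (eval (⟨x, hx⟩ : E.O) q).2
  rw [← eval_coe, mul_sub, ← mul_assoc, zpow_neg, zpow_natCast,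
    mul_inv_cancel₀ (pow_ne_zero _ (t_ne_zero E)), one_mul] at h1
  simpa using h1

/-- The section of `Φ_ns` at `y` is a finite sum of lifts, one for each non-singular point of the
fibre of `q̄` over the residue of `t ^ m y`. -/
theorem phiNS_section (f : K × K → ℂ) {m : ℕ} (hm : 0 < m) (q : Polynomial E.O) {y : E.Fc}
    (hy : E.t ^ m * y ∈ E.O) : ∃ b : K → E.Fc, (fun x => E.PhiNS f (-m) q x y) =
      ∑ u ∈ fib (q.map E.res) (E.resF (E.t ^ m * y)),
        E.liftAt (fun v => f (u, -eval u (derivative (q.map E.res)) * v)) (b u) m := by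
  set p := q.map E.res
  set y' : E.O := ⟨E.t ^ m * y, hy⟩ with hy'
  have hry : E.resF (E.t ^ m * y) = E.res y' := resF_of_mem E hy
  have hex : ∀ u ∈ fib p (E.resF (E.t ^ m * y)), ∃ b e : E.O, E.res b = u ∧
      eval b q - y' = tO E ^ (m + 1) * e := fun u hu =>
    hensel E q y' ((mem_fib.1 hu).1.trans hry) (mem_fib.1 hu).2 m
  choose! b e hb he using hex
  have ht := pow_ne_zero m (t_ne_zero E)
  -- a translate based at `b u` only meets points of `O` with residue `u`
  have hsupp : ∀ (u : K) (x : E.Fc), E.t ^ (-m : ℤ) * (x - b u) ∈ E.O →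
      ∃ hx : x ∈ E.O, E.res ⟨x, hx⟩ = E.res (b u) := by
    intro u x hz
    have hd : x - b u = E.t ^ m * (E.t ^ (-m : ℤ) * (x - b u)) := by
      rw [zpow_neg, zpow_natCast, mul_inv_cancel_left₀ ht]
    have hx : x ∈ E.O := by
      have := add_mem (mul_mem (tpow_mem E m) hz) (b u).2
      rwa [← hd, sub_add_cancel] at this
    exact ⟨hx, res_eq_of_sub E hm (x := ⟨x, hx⟩) hz hd⟩
  have hzero : ∀ u x, (¬ ∃ hx : x ∈ E.O, E.res ⟨x, hx⟩ = E.res (b u)) →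
      E.liftAt (fun v => f (u, -eval u (derivative p) * v)) (b u) m x = 0 := by
    intro u x h
    rw [CDVF.liftAt, CDVF.lift0, if_neg (fun hz => h (hsupp u x hz))]
  refine ⟨fun u => b u, funext fun x => ?_⟩
  rw [Finset.sum_apply]
  by_cases hx : x ∈ E.O
  swap
  · rw [CDVF.PhiNS, if_neg (fun h => hx h.1), Finset.sum_eq_zero]
    exact fun u _ => hzero u x fun ⟨h, _⟩ => hx h
  have hrx : E.resF x = E.res ⟨x, hx⟩ := resF_of_mem E hx
  by_cases hu : E.resF x ∈ fib p (E.resF (E.t ^ m * y))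
  · rw [CDVF.PhiNS, if_pos ⟨hx, (mem_fib.1 hu).2⟩, Finset.sum_eq_single_of_mem _ hu]
    · exact lift_eq E f m q (x := ⟨x, hx⟩) hrx.symm (hb _ hu) (mem_fib.1 hu).2 rfl (he _ hu)
    · intro u hu' hne
      refine hzero u x fun ⟨_, h⟩ => hne ?_
      rw [hrx, h, hb u hu']
  · rw [Finset.sum_eq_zero]
    · rw [CDVF.PhiNS, ite_eq_right_iff]
      rintro ⟨-, h'⟩
      rw [CDVF.Phi, CDVF.lift0₂, if_neg]
      rintro ⟨-, h⟩
      apply hu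
      refine mem_fib.2 ⟨?_, h'⟩
      rw [hry, hrx, ← res_eval]
      refine (res_eq_of_sub E hm (x := y') (b := eval ⟨x, hx⟩ q) h ?_).symm
      rw [← eval_coe, mul_sub, ← mul_assoc, zpow_neg, zpow_natCast, mul_inv_cancel₀ ht, one_mul]
    · intro u hu'
      refine hzero u x fun ⟨_, h⟩ => hu ?_
      rw [hrx, h, hb u hu']
      exact hu'

theorem phi_eq_add (f : K × K → ℂ) (R : ℤ) (q : Polynomial E.O) (x y : E.Fc) :
    E.Phi f R q x y = E.PhiNS f R q x y + E.PhiSing f R q x y := by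
  rw [CDVF.PhiNS, CDVF.PhiSing]
  by_cases hx : x ∈ E.O
  · by_cases h : eval (E.resF x) (derivative (q.map E.res)) = 0 <;> simp [hx, h, -derivative_map]
  · simp [hx, CDVF.Phi, CDVF.lift0₂]

end NS

/-! ### Integrals of the lifts -/

section Integral

variable {K : Type} [NontriviallyNormedField K] [MeasurableSpace K] {μ : Measure K}
  {E : CDVF K} {I : (E.Fc → CX) →ₗ[CX] CX}

theorem liftAt_mem {f : K → ℂ} (hf : Integrable f μ) (a : E.Fc) (n : ℤ) :
    E.liftAt f a n ∈ E.LF μ := Submodule.subset_span ⟨f, hf, a, n, rfl⟩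

omit [MeasurableSpace K] in
theorem liftAt_zero_zero (f : K → ℂ) : E.liftAt f 0 0 = E.lift0 f := by
  funext x; simp [CDVF.liftAt]

theorem lift0_mem {f : K → ℂ} (hf : Integrable f μ) : E.lift0 f ∈ E.LF μ := by
  rw [← liftAt_zero_zero]; exact liftAt_mem hf 0 0

omit [MeasurableSpace K] in
theorem absF_tpow (n : ℤ) : E.absF (E.t ^ n) = RatFunc.X ^ n := by
  have ht := t_ne_zero E
  have hν : E.ν (E.t ^ n) = n := by
    obtain ⟨u, hu, e⟩ := E.hν _ (zpow_ne_zero n ht)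
    have h1 : (u : E.Fc) = E.t ^ (n - E.ν (E.t ^ n)) := by
      rw [zpow_sub₀ ht, eq_div_iff (zpow_ne_zero _ ht)]; exact e.symm
    have h2 := u.2
    have h3 := inv_mem_of_isUnit E hu
    rw [h1, zpow_mem_iff] at h2
    rw [h1, ← zpow_neg, zpow_mem_iff] at h3
    omega
  rw [CDVF.absF, hν, ← zpow_add₀ ht, add_neg_cancel, zpow_zero]
  have : E.resF 1 = 1 := by rw [resF_of_mem E (one_mem _)]; exact map_one _
  simp [this]

theorem integral_liftAt (hI : E.IsIntegralF μ I) {f : K → ℂ} (hf : Integrable f μ) (a : E.Fc)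
    (n : ℤ) : I (E.liftAt f a n) = algebraMap ℂ CX (∫ u, f u ∂μ) * RatFunc.X ^ n := by
  have h1 := hI.2.1 _ (liftAt_mem hf a n) a
  have e1 : (fun x => E.liftAt f a n (x + a)) = fun x => E.lift0 f (E.t ^ (-n) * x) := by
    funext x; simp [CDVF.liftAt]
  rw [e1, hI.2.2 _ (lift0_mem hf) _ (zpow_ne_zero _ (t_ne_zero E)), absF_tpow, hI.1 f hf] at h1
  rw [← h1, zpow_neg, inv_inv, mul_comm]

/-- The scaling axiom of the integral for units of `O` says that the norm of `K` is the
modulus of the Haar measure. -/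
theorem integral_mul_left (hI : E.IsIntegralF μ I) (a : K) (ha : a ≠ 0) (f : K → ℂ)
    (hf : Integrable f μ) (hfa : Integrable (fun u => f (a * u)) μ) :
    ∫ u, f (a * u) ∂μ = (‖a‖⁻¹ : ℝ) * ∫ u, f u ∂μ := by
  obtain ⟨α, rfl⟩ := E.hres_surj a
  have hα0 : (α : E.Fc) ≠ 0 := by
    intro h
    apply ha
    rw [show α = 0 from Subtype.ext h, map_zero]
  have h := hI.2.2 _ (lift0_mem hf) α hα0
  have e : (fun x => E.lift0 f (α * x)) = E.lift0 fun u => f (E.res α * u) := by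
    funext x
    rw [CDVF.lift0, CDVF.lift0]
    have hiff : (α : E.Fc) * x ∈ E.O ↔ x ∈ E.O := by rw [mul_comm]; exact mul_mem_iff E ha
    by_cases hx : x ∈ E.O
    · have e2 : E.resF (α * x) = E.res α * E.resF x := by
        rw [resF_of_mem E hx, ← map_mul, ← resF_coe]; rfl
      rw [if_pos hx, if_pos (hiff.2 hx), e2]
    · rw [if_neg hx, if_neg (fun h => hx (hiff.1 h))]
  have hν := nu_eq_of_unit E α.2 (inv_mem_of_res_ne E ha) hα0
  rw [e, hI.1 _ hf, hI.1 _ hfa, CDVF.absF, hν, neg_zero, zpow_zero, mul_one, resF_coe, zpow_zero,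
    mul_one, ← map_inv₀, ← map_mul] at h
  rw [(algebraMap ℂ CX).injective h, Complex.ofReal_inv]

variable [BorelSpace K] [ProperSpace K] [μ.IsAddHaarMeasure] {f : K × K → ℂ}

omit [MeasurableSpace K] [BorelSpace K] [ProperSpace K] in
theorem section_continuous (hf : IsSB f) (u : K) : Continuous fun v => f (u, v) :=
  hf.1.continuous.comp (by fun_prop)

omit [MeasurableSpace K] [BorelSpace K] [ProperSpace K] in
theorem section_compact (hf : IsSB f) (u : K) : HasCompactSupport fun v => f (u, v) := by
  refine HasCompactSupport.intro (hf.2.image continuous_snd) fun v hv => ?_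
  by_contra h
  exact hv ⟨(u, v), subset_tsupport f h, rfl⟩

omit [ProperSpace K] in
theorem section_integrable (hf : IsSB f) (u : K) : Integrable (fun v => f (u, v)) μ :=
  (section_continuous hf u).integrable_of_hasCompactSupport (section_compact hf u)

omit [ProperSpace K] in
theorem section_integrable_mul (hf : IsSB f) (u : K) {a : K} (ha : a ≠ 0) :
    Integrable (fun v => f (u, a * v)) μ :=
  Continuous.integrable_of_hasCompactSupport ((section_continuous hf u).comp (by fun_prop))
    ((section_compact hf u).comp_homeomorph (Homeomorph.mulLeft₀ a ha))

omit [BorelSpace K] [ProperSpace K] [μ.IsAddHaarMeasure] in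
theorem fibreIntegral_locallyConstant (hf : IsSB f) :
    IsLocallyConstant fun u => ∫ v, f (u, v) ∂μ := by
  obtain ⟨δ, hδ, h⟩ := exists_uniform hf.1 hf.2
  rw [IsLocallyConstant.iff_eventually_eq]
  intro u
  filter_upwards [Metric.ball_mem_nhds u hδ] with u' hu'
  refine integral_congr_ae (Filter.Eventually.of_forall fun v => ?_)
  have := h (u, v) (u' - u, 0) (by simpa [Prod.norm_def, ← mem_ball_iff_norm] using hu')
  simpa using this

omit [BorelSpace K] [ProperSpace K] [μ.IsAddHaarMeasure] in
theorem fibreIntegral_compact (hf : IsSB f) :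
    HasCompactSupport fun u => ∫ v, f (u, v) ∂μ := by
  refine HasCompactSupport.intro (hf.2.image continuous_fst) fun u hu => ?_
  have : ∀ v, f (u, v) = 0 := fun v => by
    by_contra h
    exact hu ⟨(u, v), subset_tsupport f h, rfl⟩
  simp [this]

omit [ProperSpace K] in
theorem fibreIntegral_integrable (hf : IsSB f) :
    Integrable (fun u => ∫ v, f (u, v) ∂μ) μ :=
  (fibreIntegral_locallyConstant hf).continuous.integrable_of_hasCompactSupport
    (fibreIntegral_compact hf)

/-- When the norm of `K` is archimedean, `f = 0` and both sides vanish; otherwise `K` is ultrametric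
and the change of variables applies. -/
theorem push_fibreIntegral (hI : E.IsIntegralF μ I) (hf : IsSB f) {p : K[X]}
    (hp : derivative p ≠ 0) :
    Integrable (push p fun u => ∫ v, f (u, v) ∂μ) μ ∧
      ∫ w, push p (fun u => ∫ v, f (u, v) ∂μ) w ∂μ = ∫ u, ∫ v, f (u, v) ∂μ ∂μ := by
  by_cases h : ∀ n : ℕ, ‖(n : K)‖ ≤ 1
  · have := IsUltrametricDist.isUltrametricDist_of_forall_norm_natCast_le_one h
    exact push_integral μ (integral_mul_left hI) p hp _ (fibreIntegral_locallyConstant hf)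
      (fibreIntegral_integrable hf)
  · push Not at h
    obtain ⟨n, hn⟩ := h
    rw [eq_zero_of_one_lt hf hn]
    have : (push p fun u : K => ∫ v, (0 : K × K → ℂ) (u, v) ∂μ) = 0 := by
      funext w; simp [push]
    rw [this]
    exact ⟨integrable_zero _ _ _, by simp⟩

/-- The inner integral of `Φ_ns` is `X ^ m` times the lift at `0, -m` of the pushforward density of
`u ↦ ∫ f(u, v) dv` along `q̄`; the powers of `X` cancel in the repeated integral. -/
theorem phiNS_fubini (hI : E.IsIntegralF μ I) (hf : IsSB f) {m : ℕ} (hm : 0 < m)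
    (q : Polynomial E.O) (hq : derivative (q.map E.res) ≠ 0) :
    (∀ y, (fun x => E.PhiNS f (-m) q x y) ∈ E.LF μ) ∧
      (fun y => I fun x => E.PhiNS f (-m) q x y) ∈ E.LF μ ∧
      I (fun y => I fun x => E.PhiNS f (-m) q x y) =
        algebraMap ℂ CX (∫ u, ∫ v, f (u, v) ∂μ ∂μ) := by
  set p := q.map E.res
  obtain ⟨hpi, hpe⟩ := push_fibreIntegral hI hf hq
  have hterm : ∀ {w u : K}, u ∈ fib p w →
      Integrable (fun v => f (u, -eval u (derivative p) * v)) μ := fun hu =>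
    section_integrable_mul hf _ (neg_ne_zero.2 (mem_fib.1 hu).2)
  have hI1 : (fun y => I fun x => E.PhiNS f (-m) q x y) =
      (RatFunc.X ^ m : CX) • E.liftAt (push p fun u => ∫ v, f (u, v) ∂μ) 0 (-m) := by
    funext y
    rw [Pi.smul_apply, CDVF.liftAt, CDVF.lift0, sub_zero, neg_neg, zpow_natCast, smul_eq_mul]
    by_cases hy : E.t ^ m * y ∈ E.O
    · obtain ⟨b, hb⟩ := phiNS_section E f hm q hy
      rw [hb, map_sum, if_pos hy, push, map_sum, Finset.mul_sum]
      refine Finset.sum_congr rfl fun u hu => ?_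
      have hd := (mem_fib.1 hu).2
      rw [integral_liftAt hI (hterm hu), integral_mul_left hI _ (neg_ne_zero.2 hd)
        (fun v => f (u, v)) (section_integrable hf u) (hterm hu), norm_neg, zpow_natCast, mul_comm]
    · have : (fun x => E.PhiNS f (-m) q x y) = 0 := funext (phiNS_eq_zero E f m q hy)
      rw [this, map_zero, if_neg hy, mul_zero]
  refine ⟨fun y => ?_, ?_, ?_⟩
  · by_cases hy : E.t ^ m * y ∈ E.O
    · obtain ⟨b, hb⟩ := phiNS_section E f hm q hy
      rw [hb]
      exact sum_mem fun u hu => liftAt_mem (hterm hu) _ _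
    · have : (fun x => E.PhiNS f (-m) q x y) = 0 := funext (phiNS_eq_zero E f m q hy)
      rw [this]; exact zero_mem _
  · rw [hI1]
    exact Submodule.smul_mem _ _ (liftAt_mem hpi _ _)
  · rw [hI1, map_smul, integral_liftAt hI hpi, hpe, smul_eq_mul, zpow_neg, zpow_natCast,
      mul_left_comm, mul_inv_cancel₀ (pow_ne_zero _ RatFunc.X_ne_zero), mul_one]

omit [ProperSpace K] in
/-- Integrating first in `y`, the sections of `Φ` are translates of lifts, so that the polynomial
disappears from the inner integral. -/
theorem phi_inner (hI : E.IsIntegralF μ I) (hf : IsSB f) (R : ℤ) (q : Polynomial E.O) :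
    (∀ x, (fun y => E.Phi f R q x y) ∈ E.LF μ) ∧
      (fun x => I fun y => E.Phi f R q x y) = E.lift0 fun u => ∫ v, f (u, v) ∂μ := by
  have hin : ∀ {x}, x ∈ E.O → (fun y => E.Phi f R q x y) =
      E.liftAt (fun v => f (E.resF x, v)) (E.t ^ R * eval x (q.map E.O.subtype)) 0 := by
    intro x hx
    funext y
    simp [CDVF.Phi, CDVF.lift0₂, CDVF.liftAt, CDVF.lift0, hx]
  have hout : ∀ {x}, x ∉ E.O → (fun y => E.Phi f R q x y) = 0 := by
    intro x hx
    funext y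
    simp [CDVF.Phi, CDVF.lift0₂, hx]
  refine ⟨fun x => ?_, funext fun x => ?_⟩
  · by_cases hx : x ∈ E.O
    · rw [hin hx]; exact liftAt_mem (section_integrable hf _) _ _
    · rw [hout hx]; exact zero_mem _
  · rw [CDVF.lift0]
    by_cases hx : x ∈ E.O
    · rw [hin hx, integral_liftAt hI (section_integrable hf _), if_pos hx, zpow_zero, mul_one]
    · rw [hout hx, map_zero, if_neg hx]

end Integral

end FubiniPoly

/-- If q̄′ is not the zero polynomial, then Φ is Fubini if and only if
all sections of Φ_sing are integrable, y ↦ ∫^F Φ_sing(x,y) dx is integrable, and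
∫^F∫^F Φ_sing dx dy = 0. -/
theorem statement14 {K : Type} [NontriviallyNormedField K] [MeasurableSpace K] [BorelSpace K]
    [LocallyCompactSpace K] (μ : Measure K) [Measure.IsAddHaarMeasure μ]
    (E : CDVF K) (I : (E.Fc → CX) →ₗ[CX] CX) (hI : E.IsIntegralF μ I)
    (R : ℤ) (hR : R < 0) (q : Polynomial E.O) (hq0 : q.coeff 0 = 0)
    (hqbar : q.map E.res ≠ 0) (f : K × K → ℂ) (hf : IsSB f)
    (hq' : Polynomial.derivative (q.map E.res) ≠ 0) :
    E.FFubini μ I (E.Phi f R q) ↔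
      ((∀ y : E.Fc, (fun x => E.PhiSing f R q x y) ∈ E.LF μ) ∧
       ((fun y => I (fun x => E.PhiSing f R q x y)) ∈ E.LF μ) ∧
       I (fun y => I (fun x => E.PhiSing f R q x y)) = 0) := by
  have : ProperSpace K := ProperSpace.of_nontriviallyNormedField_of_weaklyLocallyCompactSpace K
  obtain ⟨m, rfl⟩ : ∃ m : ℕ, R = -m := ⟨R.natAbs, by omega⟩
  obtain ⟨hN1, hN2, hN3⟩ := FubiniPoly.phiNS_fubini hI hf (m := m) (by omega) q hq'
  obtain ⟨hP1, hP2⟩ := FubiniPoly.phi_inner hI hf (-m) q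
  have hFi := FubiniPoly.fibreIntegral_integrable (μ := μ) hf
  have hsec : ∀ y, (fun x => E.Phi f (-m) q x y) =
      (fun x => E.PhiNS f (-m) q x y) + fun x => E.PhiSing f (-m) q x y := fun y =>
    funext fun x => FubiniPoly.phi_eq_add E f (-m) q x y
  have hint : (fun y => I fun x => E.Phi f (-m) q x y) =
      (fun y => I fun x => E.PhiNS f (-m) q x y) +
        fun y => I fun x => E.PhiSing f (-m) q x y := by
    funext y
    rw [hsec, map_add]
    rfl
  have hx : ∀ y, (fun x => E.Phi f (-m) q x y) ∈ E.LF μ ↔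
      (fun x => E.PhiSing f (-m) q x y) ∈ E.LF μ := fun y => by
    rw [hsec]
    exact Submodule.add_mem_iff_right _ (hN1 y)
  have hy : (fun y => I fun x => E.Phi f (-m) q x y) ∈ E.LF μ ↔
      (fun y => I fun x => E.PhiSing f (-m) q x y) ∈ E.LF μ := by
    rw [hint]
    exact Submodule.add_mem_iff_right _ hN2
  have hval : I (fun x => I fun y => E.Phi f (-m) q x y) =
      I (fun y => I fun x => E.Phi f (-m) q x y) ↔
      I (fun y => I fun x => E.PhiSing f (-m) q x y) = 0 := by
    rw [hint, map_add, hN3, hP2, hI.1 _ hFi]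
    exact left_eq_add
  have hmem : (fun x => I fun y => E.Phi f (-m) q x y) ∈ E.LF μ := by
    rw [hP2]
    exact FubiniPoly.lift0_mem hFi
  constructor
  · rintro ⟨-, -, h3, h4, h5⟩
    exact ⟨fun y => (hx y).1 (h3 y), hy.1 h4, hval.1 h5⟩
  · rintro ⟨h3, h4, h5⟩
    exact ⟨hP1, hmem, fun y => (hx y).2 (h3 y), hy.2 h4, hval.2 h5⟩
end
end
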